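/- Let $s > 1 + d/2$ and let $u \in H^s(\mathbb{R}^d;\mathbb{R}^d)$ be divergence-free and $f \in H^s(\mathbb{R}^d)$. Then $|(\Lambda^s(u\cdot\nabla f) - u\cdot\nabla \Lambda^s f, \Lambda^s f)_{L^2}| \le C (\|\nabla u\|_{L^\infty}\|\Lambda^s f\|_{L^2} + \|\Lambda^s u\|_{L^2}\|\nabla f\|_{L^\infty}) \|\Lambda^s f\|_{L^2}$. -/

import Mathlib

/-!
For divergence-free `u` the operator `u · ∇` is skew-symmetric (`adv_skew`), so the term
`(u · ∇Λ^s f, Λ^s f)` vanishes and, by Plancherel, the left-hand side equals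
`Re ∫ |ξ|^(2s) conj (𝓕 f) 𝓕 (u · ∇f) dξ` (`commutator_integral`).

The symbol is then split into scales: `c |ξ|^(2s) = ∫₀^∞ t^(-2s-1) φ(t|ξ|) dt` for a bump `φ`
supported in an annulus (`scale_integral`), so it is enough to estimate the contribution of the
frequencies of size about `1/t`. By dilation (`scaled_estimate`) this reduces to unit frequency
(`unit_scale`), where a convolution operator `K` selects the output frequencies `|ξ| ≥ 1`.
Write `f` as the sum of its high-frequency part `h` and its low-frequency part `l`.

* For `h`, the commutator of `K` with `u · ∇` is an integral operator whose kernel contains the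
  difference `u (x - z) - u x`, so it costs only `‖∇u‖_∞ ‖h‖₂` (`commutator_bound`); what remains is
  `(u · ∇Kh, Kh)`, whose real part is zero by skew-symmetry (`re_inner_adv_self`).
* For `l`, the product of two factors of low frequency is invisible to `K`, so only the
  high-frequency part of `u` contributes, at a cost of `‖∇f‖_∞` times its `L²` norm.

At scale `t` this bounds the contribution by the `L²` norms of `f` and `u` restricted to
frequencies above `1/(4t)`. Integrating against `t^(-2s-1) dt` with the Cauchy–Schwarz inequality
turns these into `‖Λ^s f‖₂` and `‖Λ^s u‖₂` (`freq_estimate`).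
-/

open MeasureTheory Real
open scoped FourierTransform
noncomputable section

abbrev Ed (d : ℕ) := EuclideanSpace ℝ (Fin d)

/-- `Λ^s`, the Fourier multiplier with symbol `|ξ|^s`, acting on real functions. -/
def LamR (d : ℕ) (s : ℝ) (f : Ed d → ℝ) (x : Ed d) : ℝ :=
  (𝓕⁻ (fun ξ => ((‖ξ‖ ^ s : ℝ) : ℂ) * 𝓕 (fun y => (f y : ℂ)) ξ) x).re

section KatoPonce

open scoped SchwartzMap LineDeriv Convolution InnerProductSpace ComplexConjugate

variable {d : ℕ}

/-! ### Products, convolutions and derivatives of Schwartz functions -/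

/-- The `i`-th standard basis vector of `ℝ^d`. -/
abbrev bas (i : Fin d) : Ed d := EuclideanSpace.single i (1 : ℝ)

/-- The pointwise product of two Schwartz functions. -/
def pmul (a b : 𝓢(Ed d, ℂ)) : 𝓢(Ed d, ℂ) := SchwartzMap.pairing (ContinuousLinearMap.mul ℂ ℂ) a b

/-- The convolution of two Schwartz functions. -/
def cnv (a b : 𝓢(Ed d, ℂ)) : 𝓢(Ed d, ℂ) :=
  SchwartzMap.convolution (ContinuousLinearMap.mul ℂ ℂ) a b

/-- A real Schwartz function regarded as a complex one. -/
def toC (u : 𝓢(Ed d, ℝ)) : 𝓢(Ed d, ℂ) := SchwartzMap.postcompCLM Complex.ofRealCLM u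

/-- The advection term `u · ∇f`. -/
def adv (u : Fin d → 𝓢(Ed d, ℂ)) (f : 𝓢(Ed d, ℂ)) : 𝓢(Ed d, ℂ) :=
  ∑ i, pmul (u i) (∂_{bas i} f)

@[simp] lemma pmul_apply (a b : 𝓢(Ed d, ℂ)) (x : Ed d) : pmul a b x = a x * b x := rfl

@[simp] lemma toC_apply (u : 𝓢(Ed d, ℝ)) (x : Ed d) : toC u x = (u x : ℂ) := rfl

lemma cnv_apply (a b : 𝓢(Ed d, ℂ)) (x : Ed d) : cnv a b x = ∫ z, a z * b (x - z) := by
  rw [cnv, SchwartzMap.convolution_apply]; rfl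

lemma fourier_cnv (a b : 𝓢(Ed d, ℂ)) (ξ : Ed d) : 𝓕 (cnv a b) ξ = 𝓕 a ξ * 𝓕 b ξ := by
  rw [cnv, SchwartzMap.fourier_convolution]; rfl

lemma adv_apply (u : Fin d → 𝓢(Ed d, ℂ)) (f : 𝓢(Ed d, ℂ)) (x : Ed d) :
    adv u f x = ∑ i, u i x * (∂_{bas i} f) x := by
  simp [adv]

lemma fourier_inj {a b : 𝓢(Ed d, ℂ)} (h : ∀ ξ, 𝓕 a ξ = 𝓕 b ξ) : a = b := by
  have : 𝓕 a = 𝓕 b := SchwartzMap.ext h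
  have h2 := congrArg (fun z : 𝓢(Ed d, ℂ) => 𝓕⁻ z) this
  simpa using h2

lemma fourier_lineDeriv (f : 𝓢(Ed d, ℂ)) (v ξ : Ed d) :
    𝓕 (∂_{v} f) ξ = 2 * π * Complex.I * (inner ℝ ξ v : ℝ) * 𝓕 f ξ := by
  rw [SchwartzMap.fourier_lineDerivOp_eq]
  have : (fun ξ : Ed d => inner ℝ ξ v).HasTemperateGrowth := by fun_prop
  simp [SchwartzMap.smulLeftCLM_apply_apply this]
  ring

lemma lineDeriv_cnv_left (a b : 𝓢(Ed d, ℂ)) (v : Ed d) :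
    ∂_{v} (cnv a b) = cnv (∂_{v} a) b := by
  refine fourier_inj fun ξ => ?_
  rw [fourier_lineDeriv, fourier_cnv, fourier_cnv, fourier_lineDeriv]; ring

lemma lineDeriv_cnv_right (a b : 𝓢(Ed d, ℂ)) (v : Ed d) :
    ∂_{v} (cnv a b) = cnv a (∂_{v} b) := by
  refine fourier_inj fun ξ => ?_
  rw [fourier_lineDeriv, fourier_cnv, fourier_cnv, fourier_lineDeriv]; ring

lemma cnv_sub (a b c : 𝓢(Ed d, ℂ)) : cnv a (b - c) = cnv a b - cnv a c := by
  simp [cnv]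

lemma cnv_add (a b c : 𝓢(Ed d, ℂ)) : cnv a (b + c) = cnv a b + cnv a c := by
  simp [cnv]

lemma cnv_sum (a : 𝓢(Ed d, ℂ)) (b : Fin d → 𝓢(Ed d, ℂ)) : cnv a (∑ i, b i) = ∑ i, cnv a (b i) := by
  simp [cnv]

lemma lineDeriv_pmul (a b : 𝓢(Ed d, ℂ)) (v x : Ed d) :
    (∂_{v} (pmul a b)) x = (∂_{v} a) x * b x + a x * (∂_{v} b) x := by
  simp only [SchwartzMap.lineDerivOp_apply_eq_fderiv]
  have : (pmul a b : Ed d → ℂ) = fun x => a x * b x := rfl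
  rw [this, fderiv_fun_mul a.differentiableAt b.differentiableAt]
  simp
  ring

lemma lineDeriv_toC (u : 𝓢(Ed d, ℝ)) (v x : Ed d) :
    (∂_{v} (toC u)) x = (fderiv ℝ u x v : ℂ) := by
  rw [SchwartzMap.lineDerivOp_apply_eq_fderiv]
  have : (toC u : Ed d → ℂ) = Complex.ofRealCLM ∘ u := rfl
  rw [this, (Complex.ofRealCLM.hasFDerivAt.comp x (u.hasFDerivAt x)).fderiv]
  simp

/-- Frequency supports add under products: if the Fourier transforms of `a` and `b` live in the ball
of radius `1/2`, that of `a b` lives in the unit ball. -/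
lemma fourier_pmul_eq_zero (a b : 𝓢(Ed d, ℂ)) (ha : ∀ ξ, 1 / 2 ≤ ‖ξ‖ → 𝓕 a ξ = 0)
    (hb : ∀ ξ, 1 / 2 ≤ ‖ξ‖ → 𝓕 b ξ = 0) (ξ : Ed d) (hξ : 1 ≤ ‖ξ‖) : 𝓕 (pmul a b) ξ = 0 := by
  have key : 𝓕⁻ (pmul a b) = cnv (𝓕⁻ a) (𝓕⁻ b) := by
    have : pmul a b = 𝓕 (cnv (𝓕⁻ a) (𝓕⁻ b)) := by
      ext x; rw [fourier_cnv]; simp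
    rw [this]; simp
  have h1 : ∀ (c : 𝓢(Ed d, ℂ)) (η : Ed d), (𝓕⁻ c) η = 𝓕 c (-η) := by
    intro c η
    rw [SchwartzMap.fourierInv_apply_eq]; simp
  have h2 : 𝓕 (pmul a b) ξ = (𝓕⁻ (pmul a b)) (-ξ) := by rw [h1]; simp
  rw [h2, key, cnv_apply]
  refine integral_eq_zero_of_ae (Filter.Eventually.of_forall fun z => ?_)
  simp only [h1, Pi.zero_apply]
  rcases le_or_gt (1/2) ‖z‖ with hz | hz
  · rw [ha _ (by simpa using hz)]; simp
  · rw [hb, mul_zero]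
    have : ‖ξ‖ ≤ ‖-(-ξ - z)‖ + ‖z‖ := by
      have := norm_sub_le (-(-ξ - z)) z
      simpa using this
    linarith

/-! ### Commutators with convolution operators -/

lemma integrable_cnv (a b : 𝓢(Ed d, ℂ)) (x : Ed d) : Integrable fun z => a z * b (x - z) := by
  refine a.integrable.mul_bdd (c := SchwartzMap.seminorm ℝ 0 0 b) ?_ ?_
  · exact (b.continuous.comp (by fun_prop)).aestronglyMeasurable
  · exact Filter.Eventually.of_forall fun z => b.norm_le_seminorm ℝ _

/-- Young's inequality for `L¹ * L²`, in trilinear form. -/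
lemma trilinear_bound (W : Ed d → ℝ) (hW : Integrable W) (hWm : Measurable W) (a b : 𝓢(Ed d, ℂ))
    (Φ : Ed d → Ed d → ℂ) (hΦ : ∀ x z, ‖Φ x z‖ ≤ W z * ‖b (x - z)‖) :
    ‖∫ x, conj (a x) * ∫ z, Φ x z‖ ≤ (∫ z, ‖W z‖) * (‖a.toLp 2‖ * ‖b.toLp 2‖) := by
  have hL2 : ∀ c : 𝓢(Ed d, ℂ), ENNReal.ofReal ‖c.toLp 2‖ = (∫⁻ x, ‖c x‖ₑ ^ (2:ℝ)) ^ (1/(2:ℝ)) := by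
    intro c
    rw [SchwartzMap.norm_toLp, ENNReal.ofReal_toReal (c.memLp 2 volume).2.ne,
      eLpNorm_eq_lintegral_rpow_enorm_toReal (by simp) (by simp)]
    simp
  have h1 : ‖∫ x, conj (a x) * ∫ z, Φ x z‖ₑ
      ≤ ∫⁻ x, ∫⁻ z, ‖W z‖ₑ * (‖a x‖ₑ * ‖b (x - z)‖ₑ) := by
    refine (enorm_integral_le_lintegral_enorm _).trans (lintegral_mono fun x => ?_)
    rw [enorm_mul, RCLike.enorm_conj]
    calc ‖a x‖ₑ * ‖∫ z, Φ x z‖ₑ ≤ ‖a x‖ₑ * ∫⁻ z, ‖W z‖ₑ * ‖b (x - z)‖ₑ := by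
          gcongr
          refine (enorm_integral_le_lintegral_enorm _).trans (lintegral_mono fun z => ?_)
          rw [← enorm_norm (b (x - z)), ← enorm_mul, ← enorm_norm (Φ x z)]
          rw [Real.enorm_eq_ofReal (norm_nonneg _), ← ofReal_norm]
          exact ENNReal.ofReal_le_ofReal ((hΦ x z).trans (le_abs_self _))
      _ = ∫⁻ z, ‖W z‖ₑ * (‖a x‖ₑ * ‖b (x - z)‖ₑ) := by
          rw [← lintegral_const_mul]
          · congr 1; ext z; ring
          · have := b.continuous.measurable
            fun_prop
  have h2 : (∫⁻ x, ∫⁻ z, ‖W z‖ₑ * (‖a x‖ₑ * ‖b (x - z)‖ₑ))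
      = ∫⁻ z, ‖W z‖ₑ * ∫⁻ x, ‖a x‖ₑ * ‖b (x - z)‖ₑ := by
    have ha := a.continuous.measurable
    have hb := b.continuous.measurable
    rw [lintegral_lintegral_swap]
    · congr 1; ext z
      rw [lintegral_const_mul]
      fun_prop
    · refine Measurable.aemeasurable ?_
      simp only [Function.uncurry_def]
      fun_prop
  have h3 : ∀ z, (∫⁻ x, ‖a x‖ₑ * ‖b (x - z)‖ₑ) ≤ ENNReal.ofReal (‖a.toLp 2‖ * ‖b.toLp 2‖) := by
    intro z
    have ha := a.continuous.measurable
    have hb := b.continuous.measurable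
    have := ENNReal.lintegral_mul_le_Lp_mul_Lq (volume : Measure (Ed d)) Real.HolderConjugate.two_two
      (f := fun x => ‖a x‖ₑ) (g := fun x => ‖b (x - z)‖ₑ) (by fun_prop) (by fun_prop)
    refine this.trans ?_
    rw [ENNReal.ofReal_mul (norm_nonneg _), hL2, hL2,
      lintegral_sub_right_eq_self (fun x => ‖b x‖ₑ ^ (2:ℝ)) z]
  have h4 : ‖∫ x, conj (a x) * ∫ z, Φ x z‖ₑ
      ≤ ENNReal.ofReal ((∫ z, ‖W z‖) * (‖a.toLp 2‖ * ‖b.toLp 2‖)) := by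
    refine h1.trans (h2.trans_le ?_)
    refine (lintegral_mono fun z => mul_le_mul_right (h3 z) _).trans ?_
    rw [lintegral_mul_const _ (by fun_prop),
      ENNReal.ofReal_mul (integral_nonneg fun z => norm_nonneg (W z)),
      ofReal_integral_norm_eq_lintegral_enorm hW]
  rw [← ofReal_norm] at h4
  exact (ENNReal.ofReal_le_ofReal_iff (by positivity)).1 h4

/-- The divergence-free condition on a vector field. -/
def DivFree (u : Fin d → 𝓢(Ed d, ℝ)) : Prop :=
  ∀ x, ∑ i, fderiv ℝ (u i) x (bas i) = 0

/-- For a divergence-free field, advection is in divergence form: `u · ∇h = div (u h)`. -/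
lemma adv_eq_div (u : Fin d → 𝓢(Ed d, ℝ)) (hu : DivFree u) (h : 𝓢(Ed d, ℂ)) :
    adv (fun i => toC (u i)) h = ∑ i, ∂_{bas i} (pmul (toC (u i)) h) := by
  ext x
  rw [adv_apply]
  simp only [sum_apply, lineDeriv_pmul, Finset.sum_add_distrib, ← Finset.sum_mul,
    lineDeriv_toC]
  rw [← Complex.ofReal_sum, hu x]
  simp

lemma lip_of_grad (u : 𝓢(Ed d, ℝ)) {U : ℝ} (hU : ∀ x v, |fderiv ℝ u x v| ≤ U * ‖v‖) (x y : Ed d) :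
    ‖u x - u y‖ ≤ U * ‖x - y‖ := by
  by_cases hU0 : 0 ≤ U
  · refine Convex.norm_image_sub_le_of_norm_fderiv_le (𝕜 := ℝ) (s := Set.univ)
      (fun z _ => u.differentiableAt) (fun z _ => ?_) convex_univ trivial trivial
    exact ContinuousLinearMap.opNorm_le_bound _ hU0 fun v => hU z v
  · have h0 : x - y = 0 := by
      by_contra hne
      have h1 := (abs_nonneg _).trans (hU 0 (x - y))
      have h2 : 0 < ‖x - y‖ := norm_pos_iff.2 hne
      nlinarith
    have : x = y := sub_eq_zero.1 h0
    simp [this]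

/-- The commutator of `u · ∇` with a convolution operator as an absolutely convergent integral; the
derivative has been moved from `h` to the kernel. -/
lemma commutator_apply (K : 𝓢(Ed d, ℂ)) (u : Fin d → 𝓢(Ed d, ℝ)) (hu : DivFree u) (h : 𝓢(Ed d, ℂ))
    (x : Ed d) :
    (cnv K (adv (fun i => toC (u i)) h) - adv (fun i => toC (u i)) (cnv K h)) x
      = ∫ z, ∑ i : Fin d, (∂_{bas i} K : 𝓢(Ed d, ℂ)) z * ((u i (x - z) : ℂ) - u i x) * h (x - z) := by
  rw [adv_eq_div u hu, cnv_sum, sub_apply, adv_apply, sum_apply,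
    ← Finset.sum_sub_distrib]
  have h0 : ∀ i : Fin d, Integrable fun z =>
      (∂_{bas i} K : 𝓢(Ed d, ℂ)) z * (pmul (toC (u i)) h) (x - z) := fun i => integrable_cnv _ _ _
  have h1 : ∀ i : Fin d, Integrable fun z => (∂_{bas i} K : 𝓢(Ed d, ℂ)) z * h (x - z) := fun i => integrable_cnv _ _ _
  have h2 : ∀ (i : Fin d) z, (∂_{bas i} K : 𝓢(Ed d, ℂ)) z * ((u i (x - z) : ℂ) - u i x) * h (x - z) =
    (∂_{bas i} K : 𝓢(Ed d, ℂ)) z * (pmul (toC (u i)) h) (x - z) - (u i x : ℂ) * ((∂_{bas i} K : 𝓢(Ed d, ℂ)) z * h (x - z)) := by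
    intro i z; simp; ring
  simp_rw [h2]
  rw [integral_finsetSum _ fun i _ => by exact (h0 i).sub ((h1 i).const_mul _)]
  refine Finset.sum_congr rfl fun i _ => ?_
  rw [integral_sub (h0 i) ((h1 i).const_mul _), integral_const_mul, ← lineDeriv_cnv_right,
    lineDeriv_cnv_left, lineDeriv_cnv_left, cnv_apply, cnv_apply, toC_apply]

/-- Commutator estimate in `L²`, with a constant depending on the first moment of `∇K` only. -/
lemma commutator_bound (K : 𝓢(Ed d, ℂ)) : ∃ C : ℝ, 0 ≤ C ∧ ∀ (u : Fin d → 𝓢(Ed d, ℝ)) (U : ℝ),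
    DivFree u → (∀ i x v, |fderiv ℝ (u i) x v| ≤ U * ‖v‖) → 0 ≤ U → ∀ a h : 𝓢(Ed d, ℂ),
    ‖inner ℂ (a.toLp 2) ((cnv K (adv (fun i => toC (u i)) h)
      - adv (fun i => toC (u i)) (cnv K h)).toLp 2)‖ ≤ C * U * (‖a.toLp 2‖ * ‖h.toLp 2‖) := by
  set w : Ed d → ℝ := fun z => ∑ i : Fin d, ‖(∂_{bas i} K : 𝓢(Ed d, ℂ)) z‖ * ‖z‖ with hw
  have hwi : Integrable w := by
    refine integrable_finsetSum _ fun i _ => ?_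
    simpa [mul_comm] using (∂_{bas i} K : 𝓢(Ed d, ℂ)).integrable_pow_mul volume 1
  have hwm : Measurable w := by
    have : ∀ i : Fin d, Measurable (∂_{bas i} K : 𝓢(Ed d, ℂ)) := fun i => (∂_{bas i} K : 𝓢(Ed d, ℂ)).continuous.measurable
    fun_prop
  refine ⟨∫ z, ‖w z‖, by positivity, fun u U hu hU hU0 a h => ?_⟩
  rw [SchwartzMap.inner_toL2_toL2_eq _ _ volume]
  simp_rw [commutator_apply K u hu, RCLike.inner_apply']
  refine (trilinear_bound (fun z => U * w z) (hwi.const_mul U) (hwm.const_mul U) a h _ ?_).trans ?_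
  · intro x z
    rw [← Finset.sum_mul, norm_mul]
    gcongr
    rw [hw, Finset.mul_sum]
    refine (norm_sum_le _ _).trans (Finset.sum_le_sum fun i _ => ?_)
    rw [norm_mul, ← Complex.ofReal_sub, Complex.norm_real]
    have := lip_of_grad (u i) (hU i) (x - z) x
    rw [show x - z - x = -z by abel, norm_neg] at this
    calc _ ≤ ‖(∂_{bas i} K : 𝓢(Ed d, ℂ)) z‖ * (U * ‖z‖) := by gcongr
      _ = _ := by ring
  · simp_rw [norm_mul]
    rw [integral_const_mul, Real.norm_of_nonneg hU0]
    apply le_of_eq; ring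

lemma norm_cnv_apply_le (k b : 𝓢(Ed d, ℂ)) {F : ℝ} (hb : ∀ x, ‖b x‖ ≤ F) (x : Ed d) :
    ‖cnv k b x‖ ≤ (∫ z, ‖k z‖) * F := by
  rw [cnv_apply, ← integral_mul_const]
  refine norm_integral_le_of_norm_le (k.integrable.norm.mul_const F) ?_
  refine Filter.Eventually.of_forall fun z => ?_
  rw [norm_mul]
  gcongr
  exact hb _

lemma norm_toLp_pmul_le (a b : 𝓢(Ed d, ℂ)) {F : ℝ} (hb : ∀ x, ‖b x‖ ≤ F) :
    ‖(pmul a b).toLp 2‖ ≤ F * ‖a.toLp 2‖ := by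
  refine Lp.norm_le_mul_norm_of_ae_le_mul ?_
  filter_upwards [(pmul a b).coeFn_toLp 2, a.coeFn_toLp 2] with x h1 h2
  rw [h1, h2, pmul_apply, norm_mul, mul_comm]
  gcongr
  exact hb x

lemma norm_toLp_cnv_le (K v : 𝓢(Ed d, ℂ)) {M : ℝ} (hM : ∀ ξ, ‖𝓕 K ξ‖ ≤ M) :
    ‖(cnv K v).toLp 2‖ ≤ M * ‖v.toLp 2‖ := by
  rw [← SchwartzMap.norm_fourier_toL2_eq, ← SchwartzMap.norm_fourier_toL2_eq v]
  have : 𝓕 (cnv K v) = pmul (𝓕 v) (𝓕 K) := by ext ξ; rw [fourier_cnv, pmul_apply, mul_comm]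
  rw [this]
  exact norm_toLp_pmul_le _ _ hM

/-! ### The estimate at unit frequency -/

/-- Advection by a divergence-free field is skew-symmetric. -/
lemma adv_skew (u : Fin d → 𝓢(Ed d, ℝ)) (hu : DivFree u) (G : Ed d → ℝ) (hG : ContDiff ℝ 1 G)
    {A B : ℝ} (hA : ∀ x, ‖G x‖ ≤ A) (hB : ∀ x, ‖fderiv ℝ G x‖ ≤ B) :
    Integrable (fun x => (∑ i, u i x * fderiv ℝ G x (bas i)) * G x) ∧
      ∫ x, (∑ i, u i x * fderiv ℝ G x (bas i)) * G x = 0 := by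
  have hGd : Differentiable ℝ G := hG.differentiable one_ne_zero
  have hGc : Continuous G := hG.continuous
  have hG'c : ∀ v, Continuous fun x => fderiv ℝ G x v := fun v =>
    (hG.continuous_fderiv one_ne_zero).clm_apply continuous_const
  have hu' : ∀ i v, Integrable fun x => fderiv ℝ (u i) x v := fun i v =>
    (∂_{v} (u i) : 𝓢(Ed d, ℝ)).integrable
  have hGG : ∀ x v, fderiv ℝ (fun x => G x * G x) x v = 2 * (fderiv ℝ G x v * G x) := by
    intro x v
    rw [fderiv_fun_mul (hGd x) (hGd x)]
    simp; ring
  have hbd : ∀ v x, ‖fderiv ℝ G x v * G x‖ ≤ B * ‖v‖ * A := by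
    intro v x
    rw [norm_mul]
    have h1 := (fderiv ℝ G x).le_of_opNorm_le (hB x) v
    exact mul_le_mul h1 (hA x) (norm_nonneg _) ((norm_nonneg _).trans h1)
  have hi1 : ∀ i v, Integrable fun x => u i x * (fderiv ℝ G x v * G x) := fun i v =>
    (u i).integrable.mul_bdd (((hG'c v).mul hGc).aestronglyMeasurable)
      (Filter.Eventually.of_forall (hbd v))
  have hbd2 : ∀ x, ‖G x * G x‖ ≤ A * A := fun x => by
    rw [norm_mul]
    exact mul_le_mul (hA x) (hA x) (norm_nonneg _) ((norm_nonneg _).trans (hA x))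
  have hi2 : ∀ i v, Integrable fun x => fderiv ℝ (u i) x v * (G x * G x) := fun i v =>
    (hu' i v).mul_bdd (hGc.mul hGc).aestronglyMeasurable (Filter.Eventually.of_forall hbd2)
  have hi3 : ∀ i, Integrable fun x => u i x * (G x * G x) := fun i =>
    (u i).integrable.mul_bdd (hGc.mul hGc).aestronglyMeasurable (Filter.Eventually.of_forall hbd2)
  have hip : ∀ i, ∫ x, u i x * (fderiv ℝ G x (bas i) * G x)
      = - (1/2) * ∫ x, fderiv ℝ (u i) x (bas i) * (G x * G x) := by
    intro i
    have := integral_mul_fderiv_eq_neg_fderiv_mul_of_integrable (μ := volume) (f := u i)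
      (g := fun x => G x * G x) (v := bas i) (hi2 i _)
      (by simp_rw [hGG]
          exact ((hi1 i (bas i)).const_mul 2).congr (Filter.Eventually.of_forall fun x => by
            simp only []; ring))
      (hi3 i) (fun x _ => (u i).differentiableAt) (fun x _ => (hGd x).mul (hGd x))
    simp_rw [hGG] at this
    have h2 : ∀ x, u i x * (2 * (fderiv ℝ G x (bas i) * G x))
        = 2 * (u i x * (fderiv ℝ G x (bas i) * G x)) := fun x => by ring
    simp_rw [h2, integral_const_mul] at this
    linarith
  have heq : ∀ x, (∑ i, u i x * fderiv ℝ G x (bas i)) * G x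
      = ∑ i, u i x * (fderiv ℝ G x (bas i) * G x) := fun x => by
    rw [Finset.sum_mul]; simp_rw [mul_assoc]
  simp_rw [heq]
  refine ⟨integrable_finsetSum _ fun i _ => hi1 i _, ?_⟩
  rw [integral_finsetSum _ fun i _ => hi1 i _]
  simp_rw [hip]
  rw [← Finset.mul_sum, ← integral_finsetSum _ fun i _ => hi2 i _]
  simp_rw [← Finset.sum_mul]
  have : ∀ x, ∑ i, fderiv ℝ (u i) x (bas i) = 0 := hu
  simp [this]

/-- `Re ⟨w, u · ∇w⟩ = 0` for complex `w`, from the real case applied to the real and imaginary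
parts. -/
lemma re_inner_adv_self (u : Fin d → 𝓢(Ed d, ℝ)) (hu : DivFree u) (w : 𝓢(Ed d, ℂ)) :
    (inner ℂ (w.toLp 2) ((adv (fun i => toC (u i)) w).toLp 2)).re = 0 := by
  set wr : 𝓢(Ed d, ℝ) := SchwartzMap.postcompCLM Complex.reCLM (𝕜 := ℝ) w
  set wi : 𝓢(Ed d, ℝ) := SchwartzMap.postcompCLM Complex.imCLM (𝕜 := ℝ) w
  have hwr : ∀ x v, fderiv ℝ wr x v = (fderiv ℝ w x v).re := fun x v => by
    have : (wr : Ed d → ℝ) = Complex.reCLM ∘ w := rfl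
    rw [this, (Complex.reCLM.hasFDerivAt.comp x (w.hasFDerivAt x)).fderiv]
    simp
  have hwi : ∀ x v, fderiv ℝ wi x v = (fderiv ℝ w x v).im := fun x v => by
    have : (wi : Ed d → ℝ) = Complex.imCLM ∘ w := rfl
    rw [this, (Complex.imCLM.hasFDerivAt.comp x (w.hasFDerivAt x)).fderiv]
    simp
  have hB : ∀ (g : 𝓢(Ed d, ℝ)) x, ‖fderiv ℝ g x‖ ≤
      SchwartzMap.seminorm ℝ 0 0 (SchwartzMap.fderivCLM ℝ (Ed d) ℝ g) := fun g x =>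
    (SchwartzMap.fderivCLM ℝ (Ed d) ℝ g).norm_le_seminorm ℝ x
  have h1 := adv_skew u hu wr (wr.smooth 1) (fun x => wr.norm_le_seminorm ℝ x) (hB wr)
  have h2 := adv_skew u hu wi (wi.smooth 1) (fun x => wi.norm_le_seminorm ℝ x) (hB wi)
  rw [SchwartzMap.inner_toL2_toL2_eq _ _ volume]
  have hint : Integrable fun x => inner ℂ (w x) (adv (fun i => toC (u i)) w x) := by
    refine (pmul (adv (fun i => toC (u i)) w)
      (SchwartzMap.postcompCLM (𝕜 := ℝ) (Complex.conjCLE : ℂ →L[ℝ] ℂ) w)).integrable.congr ?_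
    exact Filter.Eventually.of_forall fun x => by simp [RCLike.inner_apply]
  have h3 : (∫ x, inner ℂ (w x) (adv (fun i => toC (u i)) w x)).re
      = ∫ x, (inner ℂ (w x) (adv (fun i => toC (u i)) w x)).re :=
    (Complex.reCLM.integral_comp_comm hint).symm
  rw [h3]
  have h4 : ∀ x, (inner ℂ (w x) (adv (fun i => toC (u i)) w x)).re
      = (∑ i, u i x * fderiv ℝ wr x (bas i)) * wr x
        + (∑ i, u i x * fderiv ℝ wi x (bas i)) * wi x := by
    intro x
    rw [adv_apply, RCLike.inner_apply']
    simp only [Complex.mul_re, Complex.re_sum, Complex.im_sum, toC_apply,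
      SchwartzMap.lineDerivOp_apply_eq_fderiv, hwr, hwi, Complex.conj_re, Complex.conj_im,
      Complex.ofReal_re, Complex.ofReal_im, Complex.mul_im]
    have e1 : wr x = (w x).re := rfl
    have e2 : wi x = (w x).im := rfl
    rw [e1, e2]
    simp
    ring
  simp_rw [h4]
  rw [integral_add h1.1 h2.1, h1.2, h2.2, add_zero]

/-- The high-frequency part `h - χ(D) h`, where `χ` is the Fourier transform of the kernel `k`. -/
def hi (k h : 𝓢(Ed d, ℂ)) : 𝓢(Ed d, ℂ) := h - cnv k h

lemma fourier_hi (k h : 𝓢(Ed d, ℂ)) (ξ : Ed d) : 𝓕 (hi k h) ξ = (1 - 𝓕 k ξ) * 𝓕 h ξ := by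
  have : 𝓕 (h - cnv k h) = 𝓕 h - 𝓕 (cnv k h) :=
    map_sub (FourierTransform.fourierCLM ℂ 𝓢(Ed d, ℂ)) _ _
  rw [hi, this, sub_apply, fourier_cnv]; ring

lemma norm_toLp_add_le (a b : 𝓢(Ed d, ℂ)) :
    ‖(a + b).toLp 2‖ ≤ ‖a.toLp 2‖ + ‖b.toLp 2‖ := by
  have : (a + b).toLp 2 volume = a.toLp 2 volume + b.toLp 2 volume :=
    map_add (SchwartzMap.toLpCLM ℂ ℂ 2 volume) a b
  rw [this]; exact norm_add_le _ _

lemma norm_toLp_sum_le (a : Fin d → 𝓢(Ed d, ℂ)) :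
    ‖(∑ i, a i).toLp 2‖ ≤ ∑ i, ‖(a i).toLp 2‖ := by
  have : (∑ i, a i).toLp 2 volume = ∑ i, (a i).toLp 2 volume :=
    map_sum (SchwartzMap.toLpCLM ℂ ℂ 2 volume) a Finset.univ
  rw [this]; exact norm_sum_le _ _

lemma adv_add_right (u : Fin d → 𝓢(Ed d, ℂ)) (f g : 𝓢(Ed d, ℂ)) :
    adv u (f + g) = adv u f + adv u g := by
  ext x
  simp [SchwartzMap.lineDerivOp_apply_eq_fderiv, adv,
    LineDeriv.lineDerivOp_add, mul_add, Finset.sum_add_distrib]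

lemma adv_add_left (u v : Fin d → 𝓢(Ed d, ℂ)) (f : 𝓢(Ed d, ℂ)) :
    adv (fun i => u i + v i) f = adv u f + adv v f := by
  ext x
  simp [adv_apply, add_mul, Finset.sum_add_distrib]

lemma unit_scale_arith {C M k1 U F a b S : ℝ} (hC0 : 0 ≤ C) (hM0 : 0 ≤ M) (hk1 : 0 ≤ k1)
    (hU0 : 0 ≤ U) (hF0 : 0 ≤ F) (ha : 0 ≤ a) (hb : 0 ≤ b) (hS : 0 ≤ S) :
    C * U * (a * b) + a * (M * (k1 * F * S)) ≤ (C + M * k1) * (a * (U * b + F * S)) := by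
  have h7 : 0 ≤ C * (a * (F * S)) := by positivity
  have h8 : 0 ≤ M * k1 * (a * (U * b)) := by positivity
  linarith

/-- The frequency-localised estimate at unit scale. The output of `K` lives at frequencies `≥ 1` and
`k` cuts off to frequencies `≤ 1/2`. Splitting `f` into high and low frequencies, the high part
is a commutator bounded using `∇u` only; for the low part, only the high frequencies of `u`
can contribute. -/
lemma unit_scale (K k : 𝓢(Ed d, ℂ)) (hK : ∀ ξ, ‖ξ‖ < 1 → 𝓕 K ξ = 0)
    (hk : ∀ ξ, 1 / 2 ≤ ‖ξ‖ → 𝓕 k ξ = 0) :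
    ∃ C : ℝ, 0 ≤ C ∧ ∀ (u : Fin d → 𝓢(Ed d, ℝ)) (f : 𝓢(Ed d, ℂ)) (U F : ℝ), DivFree u →
      (∀ i x v, |fderiv ℝ (u i) x v| ≤ U * ‖v‖) → 0 ≤ U →
      (∀ (i : Fin d) x, ‖(∂_{bas i} f : 𝓢(Ed d, ℂ)) x‖ ≤ F) → 0 ≤ F →
      |(inner ℂ ((cnv K f).toLp 2) ((cnv K (adv (fun i => toC (u i)) f)).toLp 2)).re|
        ≤ C * (‖(cnv K f).toLp 2‖ * (U * ‖(hi k f).toLp 2‖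
          + F * ∑ i, ‖(hi k (toC (u i))).toLp 2‖)) := by
  obtain ⟨C, hC0, hC⟩ := commutator_bound K
  set M := SchwartzMap.seminorm ℝ 0 0 (𝓕 K)
  have hM : ∀ ξ, ‖𝓕 K ξ‖ ≤ M := fun ξ => (𝓕 K).norm_le_seminorm ℝ ξ
  have hM0 : 0 ≤ M := (norm_nonneg _).trans (hM 0)
  set k1 := ∫ z, ‖k z‖
  have hk1 : 0 ≤ k1 := integral_nonneg fun z => norm_nonneg _
  refine ⟨C + M * k1, by positivity, fun u f U F hu hU hU0 hF hF0 => ?_⟩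
  set uc : Fin d → 𝓢(Ed d, ℂ) := fun i => toC (u i)
  set h := hi k f
  set l := cnv k f with hl
  have hf : f = h + l := by simp [h, l, hi]
  have huc : uc = fun i => hi k (uc i) + cnv k (uc i) := by ext1 i; simp [hi]
  have hKl : cnv K f = cnv K h := by
    refine fourier_inj fun ξ => ?_
    rw [fourier_cnv, fourier_cnv, fourier_hi]
    rcases lt_or_ge ‖ξ‖ 1 with h1 | h1
    · simp [hK ξ h1]
    · simp [hk ξ (by linarith)]
  -- the product of two low-frequency factors is invisible to `K`
  have hlow : cnv K (adv (fun i => cnv k (uc i)) l) = 0 := by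
    rw [adv, cnv_sum]
    refine Finset.sum_eq_zero fun i _ => fourier_inj fun ξ => ?_
    rw [fourier_cnv]
    rcases lt_or_ge ‖ξ‖ 1 with h1 | h1
    · simp [hK ξ h1]
    · rw [fourier_pmul_eq_zero _ _ _ _ ξ h1]
      · simp
      · intro η hη; rw [fourier_cnv, hk η hη, zero_mul]
      · intro η hη; rw [hl, lineDeriv_cnv_right, fourier_cnv, hk η hη, zero_mul]
  have hdec : cnv K (adv uc f) = (cnv K (adv uc h) - adv uc (cnv K h)) + adv uc (cnv K h)
      + cnv K (adv (fun i => hi k (uc i)) l) := by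
    have : adv uc l = adv (fun i => hi k (uc i)) l + adv (fun i => cnv k (uc i)) l := by
      conv_lhs => rw [huc, adv_add_left]
    conv_lhs => rw [hf, adv_add_right, this, cnv_add, cnv_add, hlow]
    abel
  have hadd : ∀ a b : 𝓢(Ed d, ℂ), (a + b).toLp 2 volume = a.toLp 2 volume + b.toLp 2 volume :=
    map_add (SchwartzMap.toLpCLM ℂ ℂ 2 volume)
  have h1 := hC u U hu hU hU0 (cnv K h) h
  have h2 := re_inner_adv_self u hu (cnv K h)
  have h3 : ‖(cnv K (adv (fun i => hi k (uc i)) l)).toLp 2‖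
      ≤ M * (k1 * F * ∑ i, ‖(hi k (uc i)).toLp 2‖) := by
    refine (norm_toLp_cnv_le _ _ hM).trans ?_
    gcongr
    refine (norm_toLp_sum_le _).trans ?_
    rw [Finset.mul_sum]
    refine Finset.sum_le_sum fun i _ => norm_toLp_pmul_le _ _ fun x => ?_
    rw [hl, lineDeriv_cnv_right]
    exact norm_cnv_apply_le _ _ (hF i) x
  rw [hdec, hadd, hadd, inner_add_right, inner_add_right, hKl, Complex.add_re, Complex.add_re, h2,
    add_zero]
  refine (abs_add_le _ _).trans ?_
  have h4 := (Complex.abs_re_le_norm _).trans h1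
  have h5 := (Complex.abs_re_le_norm _).trans (norm_inner_le_norm (𝕜 := ℂ) ((cnv K h).toLp 2)
    ((cnv K (adv (fun i => hi k (uc i)) l)).toLp 2))
  have h6 : ‖(cnv K h).toLp 2‖ * ‖(cnv K (adv (fun i => hi k (uc i)) l)).toLp 2‖ ≤
    ‖(cnv K h).toLp 2‖ * (M * (k1 * F * ∑ i, ‖(hi k (uc i)).toLp 2‖)) := by gcongr
  set a := ‖(cnv K h).toLp 2‖
  set b := ‖h.toLp 2‖
  set S := ∑ i, ‖(hi k (uc i)).toLp 2‖
  have ha : 0 ≤ a := norm_nonneg _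
  have hb : 0 ≤ b := norm_nonneg _
  have hS : 0 ≤ S := Finset.sum_nonneg fun i _ => norm_nonneg _
  refine (add_le_add h4 (h5.trans h6)).trans ?_
  exact unit_scale_arith hC0 hM0 hk1 hU0 hF0 ha hb hS

/-! ### Dilations -/

/-- The dilation `x ↦ a (t x)`. -/
def dil {V : Type*} [NormedAddCommGroup V] [NormedSpace ℝ V] (t : ℝˣ) (a : 𝓢(Ed d, V)) :
    𝓢(Ed d, V) :=
  SchwartzMap.compCLMOfContinuousLinearEquiv ℝ (ContinuousLinearEquiv.smulLeft t) a

section dil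

variable {V : Type*} [NormedAddCommGroup V] [NormedSpace ℝ V]

@[simp] lemma dil_apply (t : ℝˣ) (a : 𝓢(Ed d, V)) (x : Ed d) : dil t a x = a ((t : ℝ) • x) := rfl

lemma fderiv_dil (t : ℝˣ) (a : 𝓢(Ed d, V)) (x v : Ed d) :
    fderiv ℝ (dil t a) x v = (t : ℝ) • fderiv ℝ a ((t : ℝ) • x) v := by
  have h : (dil t a : Ed d → V) = a ∘ fun x => (t : ℝ) • x := rfl
  have h2 : HasFDerivAt (fun x : Ed d => (t : ℝ) • x) ((t : ℝ) • ContinuousLinearMap.id ℝ (Ed d)) x :=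
    (hasFDerivAt_id x).const_smul (t : ℝ)
  rw [h, ((a.hasFDerivAt _).comp x h2).fderiv]
  simp

end dil

lemma fourier_dil {t : ℝˣ} (ht : 0 < (t : ℝ)) (a : 𝓢(Ed d, ℂ)) (ξ : Ed d) :
    𝓕 (dil t a) ξ = ((t : ℝ) ^ d)⁻¹ * 𝓕 a ((t : ℝ)⁻¹ • ξ) := by
  rw [SchwartzMap.fourier_coe, SchwartzMap.fourier_coe, Real.fourier_eq, Real.fourier_eq]
  have h := Measure.integral_comp_smul_of_nonneg (volume : Measure (Ed d))
    (fun y => 𝐞 (-inner ℝ y ((t : ℝ)⁻¹ • ξ)) • a y) (t : ℝ) (hR := ht.le)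
  rw [finrank_euclideanSpace_fin] at h
  have h2 : ∀ x : Ed d, inner ℝ ((t : ℝ) • x) ((t : ℝ)⁻¹ • ξ) = inner ℝ x ξ := fun x => by
    rw [inner_smul_left, inner_smul_right]
    simp only [conj_trivial]
    field_simp
  simp_rw [h2] at h
  simp only [dil_apply]
  rw [h, Complex.real_smul]

/-- Plancherel's identity for Schwartz functions. -/
lemma inner_toLp_eq (a b : 𝓢(Ed d, ℂ)) :
    inner ℂ (a.toLp 2) (b.toLp 2) = ∫ ξ, conj (𝓕 a ξ) * 𝓕 b ξ := by
  rw [← Lp.inner_fourier_eq, SchwartzMap.toLp_fourier_eq, SchwartzMap.toLp_fourier_eq,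
    SchwartzMap.inner_toL2_toL2_eq _ _ volume]
  simp only [RCLike.inner_apply']

lemma norm_toLp_eq (a : 𝓢(Ed d, ℂ)) : ‖a.toLp 2‖ = √(∫ ξ, ‖𝓕 a ξ‖ ^ 2) := by
  have h := inner_toLp_eq a a
  rw [inner_self_eq_norm_sq_to_K] at h
  have h2 : ∀ ξ, conj (𝓕 a ξ) * 𝓕 a ξ = ((‖𝓕 a ξ‖ ^ 2 : ℝ) : ℂ) := fun ξ => by
    rw [Complex.conj_mul']; push_cast; rfl
  simp_rw [h2] at h
  rw [integral_complex_ofReal] at h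
  have h3 : ‖a.toLp 2‖ ^ 2 = ∫ ξ, ‖𝓕 a ξ‖ ^ 2 := by exact Complex.ofReal_injective (by rw [← h]; push_cast; rfl)
  rw [← h3, Real.sqrt_sq (norm_nonneg _)]

lemma integral_comp_inv_smul {t : ℝˣ} (ht : 0 < (t : ℝ)) {V : Type*} [NormedAddCommGroup V]
    [NormedSpace ℝ V] (g : Ed d → V) :
    ∫ ξ, g ((t : ℝ)⁻¹ • ξ) = ((t : ℝ) ^ d) • ∫ ξ, g ξ := by
  have h := Measure.integral_comp_smul_of_nonneg (volume : Measure (Ed d)) g ((t : ℝ)⁻¹)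
    (hR := (inv_pos.2 ht).le)
  rw [finrank_euclideanSpace_fin] at h
  rw [h]; simp

lemma adv_dil (t : ℝˣ) (u : Fin d → 𝓢(Ed d, ℝ)) (f : 𝓢(Ed d, ℂ)) :
    adv (fun i => toC (dil t (u i))) (dil t f)
      = ((t : ℝ) : ℂ) • dil t (adv (fun i => toC (u i)) f) := by
  ext x
  rw [smul_apply, dil_apply, adv_apply, adv_apply]
  simp only [SchwartzMap.lineDerivOp_apply_eq_fderiv, fderiv_dil, toC_apply, dil_apply,
    Complex.real_smul, smul_eq_mul, Finset.mul_sum]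
  exact Finset.sum_congr rfl fun i _ => by ring

lemma toC_dil (t : ℝˣ) (u : 𝓢(Ed d, ℝ)) : toC (dil t u) = dil t (toC u) := rfl

/-- The `L²` norm of a Fourier-localised dilate. -/
lemma norm_toLp_dil {t : ℝˣ} (ht : 0 < (t : ℝ)) (a c : 𝓢(Ed d, ℂ)) (m : Ed d → ℂ)
    (hc : ∀ ξ, 𝓕 c ξ = m ξ * 𝓕 (dil t a) ξ) :
    ‖c.toLp 2‖ = √(((t : ℝ) ^ d)⁻¹) * √(∫ ξ, ‖m ((t : ℝ) • ξ)‖ ^ 2 * ‖𝓕 a ξ‖ ^ 2) := by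
  have htd : 0 < (t : ℝ) ^ d := pow_pos ht d
  rw [norm_toLp_eq, ← Real.sqrt_mul (inv_pos.2 htd).le]
  congr 1
  let G : Ed d → ℝ := fun η => (((t : ℝ) ^ d)⁻¹) ^ 2 * (‖m ((t : ℝ) • η)‖ ^ 2 * ‖𝓕 a η‖ ^ 2)
  have h1 : ∀ ξ, ‖𝓕 c ξ‖ ^ 2 = G ((t : ℝ)⁻¹ • ξ) := fun ξ => by
    simp only [G, hc, fourier_dil ht, norm_mul, smul_smul, mul_inv_cancel₀ ht.ne', one_smul]
    rw [Complex.norm_real, Real.norm_of_nonneg (inv_pos.2 htd).le]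
    ring
  rw [(integral_congr_ae (Filter.Eventually.of_forall h1)).trans (integral_comp_inv_smul ht G), integral_const_mul, smul_eq_mul]
  field_simp

/-- The frequency-localised estimate at an arbitrary scale `t`, by dilating `unit_scale`. -/
lemma scaled_estimate (K k : 𝓢(Ed d, ℂ)) (hK : ∀ ξ, ‖ξ‖ < 1 → 𝓕 K ξ = 0)
    (hk : ∀ ξ, 1 / 2 ≤ ‖ξ‖ → 𝓕 k ξ = 0) :
    ∃ C : ℝ, 0 ≤ C ∧ ∀ (u : Fin d → 𝓢(Ed d, ℝ)) (f : 𝓢(Ed d, ℂ)) (U F : ℝ), DivFree u →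
      (∀ i x v, |fderiv ℝ (u i) x v| ≤ U * ‖v‖) → 0 ≤ U →
      (∀ (i : Fin d) x, ‖(∂_{bas i} f : 𝓢(Ed d, ℂ)) x‖ ≤ F) → 0 ≤ F → ∀ t : ℝ, 0 < t →
      |(∫ ξ, ((‖𝓕 K (t • ξ)‖ ^ 2 : ℝ) : ℂ) *
          (conj (𝓕 f ξ) * 𝓕 (adv (fun i => toC (u i)) f) ξ)).re|
        ≤ C * (√(∫ ξ, ‖𝓕 K (t • ξ)‖ ^ 2 * ‖𝓕 f ξ‖ ^ 2) *
          (U * √(∫ ξ, ‖1 - 𝓕 k (t • ξ)‖ ^ 2 * ‖𝓕 f ξ‖ ^ 2)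
          + F * ∑ i, √(∫ ξ, ‖1 - 𝓕 k (t • ξ)‖ ^ 2 * ‖𝓕 (toC (u i)) ξ‖ ^ 2))) := by
  obtain ⟨C, hC0, hC⟩ := unit_scale K k hK hk
  refine ⟨C, hC0, fun u f U F hu hU hU0 hF hF0 t ht0 => ?_⟩
  obtain ⟨t, rfl⟩ : ∃ s : ℝˣ, (s : ℝ) = t := ⟨Units.mk0 t ht0.ne', rfl⟩
  have htd : 0 < (t : ℝ) ^ d := pow_pos ht0 d
  have h := hC (fun i => dil t (u i)) (dil t f) (t * U) (t * F)
    (fun x => by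
      simp only [fderiv_dil, ← Finset.smul_sum]
      rw [hu, smul_zero])
    (fun i x v => by
      rw [fderiv_dil, smul_eq_mul, abs_mul, abs_of_pos ht0, mul_assoc]
      exact mul_le_mul_of_nonneg_left (hU i _ v) ht0.le)
    (by positivity)
    (fun i x => by
      rw [SchwartzMap.lineDerivOp_apply_eq_fderiv, fderiv_dil, norm_smul, Real.norm_of_nonneg ht0.le]
      have := hF i ((t : ℝ) • x)
      rw [SchwartzMap.lineDerivOp_apply_eq_fderiv] at this
      exact mul_le_mul_of_nonneg_left this ht0.le)
    (by positivity)
  rw [adv_dil] at h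
  simp only [toC_dil] at h
  rw [norm_toLp_dil ht0 f (cnv K (dil t f)) _ (fourier_cnv _ _),
    norm_toLp_dil ht0 f (hi k (dil t f)) _ (fourier_hi _ _)] at h
  have hS : ∀ i, ‖(hi k (dil t (toC (u i)))).toLp 2‖ = _ := fun i =>
    norm_toLp_dil ht0 (toC (u i)) (hi k (dil t (toC (u i)))) _ (fourier_hi _ _)
  simp_rw [hS] at h
  rw [inner_toLp_eq] at h
  let G : Ed d → ℂ := fun η => ((((t : ℝ) * (((t : ℝ) ^ d)⁻¹) ^ 2 : ℝ)) : ℂ) *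
    (((‖𝓕 K ((t : ℝ) • η)‖ ^ 2 : ℝ) : ℂ) *
      (conj (𝓕 f η) * 𝓕 (adv (fun i => toC (u i)) f) η))
  have hL : ∀ ξ, conj (𝓕 (cnv K (dil t f)) ξ) *
      𝓕 (cnv K (((t : ℝ) : ℂ) • dil t (adv (fun i => toC (u i)) f))) ξ
      = G ((t : ℝ)⁻¹ • ξ) := fun ξ => by
    have hsm : ∀ (c : ℂ) (a : 𝓢(Ed d, ℂ)), 𝓕 (c • a) = c • 𝓕 a := fun c a =>
      map_smul (FourierTransform.fourierCLM ℂ 𝓢(Ed d, ℂ)) c a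
    simp only [G, fourier_cnv, hsm, smul_apply, fourier_dil ht0, smul_smul,
      mul_inv_cancel₀ ht0.ne', one_smul, map_mul, smul_eq_mul,
      Complex.conj_ofReal]
    push_cast
    rw [← Complex.conj_mul']
    ring
  rw [(integral_congr_ae (Filter.Eventually.of_forall hL)).trans (integral_comp_inv_smul ht0 G),
    integral_const_mul, Complex.real_smul, ← mul_assoc,
    ← Complex.ofReal_mul, Complex.re_ofReal_mul, abs_mul, ← Finset.mul_sum] at h
  have e1 : |(t : ℝ) ^ d * ((t : ℝ) * (((t : ℝ) ^ d)⁻¹) ^ 2)| = (t : ℝ) * ((t : ℝ) ^ d)⁻¹ := by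
    rw [abs_of_pos (by positivity)]
    field_simp
  have e2 : √(((t : ℝ) ^ d)⁻¹) * √(((t : ℝ) ^ d)⁻¹) = ((t : ℝ) ^ d)⁻¹ :=
    Real.mul_self_sqrt (by positivity)
  rw [e1] at h
  refine le_of_mul_le_mul_left (h.trans (le_of_eq ?_)) (show 0 < (t : ℝ) * ((t : ℝ) ^ d)⁻¹ by positivity)
  generalize √(((t : ℝ) ^ d)⁻¹) = q at e2 ⊢
  rw [← e2]
  ring

/-! ### Frequency cutoffs and integration over scales -/

/-- `scaled_estimate` for a concrete choice of smooth cutoffs. The weight `φ` vanishes near the origin,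
and the right-hand side only involves the frequencies above `1 / (4 t)`. -/
lemma localized_estimate (d : ℕ) : ∃ φ : ℝ → ℝ, Continuous φ ∧ (∀ r, 0 ≤ φ r) ∧ (∀ r, φ r ≤ 1) ∧
    (∀ r, 0 ≤ r → r ≤ 1 / 4 → φ r = 0) ∧ (∃ r, 0 < r ∧ φ r = 1) ∧ ∃ C : ℝ, 0 ≤ C ∧
    ∀ (u : Fin d → 𝓢(Ed d, ℝ)) (f : 𝓢(Ed d, ℂ)) (U F : ℝ), DivFree u →
      (∀ i x v, |fderiv ℝ (u i) x v| ≤ U * ‖v‖) → 0 ≤ U →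
      (∀ (i : Fin d) x, ‖(∂_{bas i} f : 𝓢(Ed d, ℂ)) x‖ ≤ F) → 0 ≤ F → ∀ t : ℝ, 0 < t →
      |(∫ ξ, φ (t * ‖ξ‖) • (conj (𝓕 f ξ) * 𝓕 (adv (fun i => toC (u i)) f) ξ)).re|
        ≤ C * (√(∫ ξ, (Set.Ioi (1 / 4 : ℝ)).indicator 1 (t * ‖ξ‖) * ‖𝓕 f ξ‖ ^ 2) *
          (U * √(∫ ξ, (Set.Ioi (1 / 4 : ℝ)).indicator 1 (t * ‖ξ‖) * ‖𝓕 f ξ‖ ^ 2)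
          + F * ∑ i, √(∫ ξ, (Set.Ioi (1 / 4 : ℝ)).indicator 1 (t * ‖ξ‖)
            * ‖𝓕 (toC (u i)) ξ‖ ^ 2))) := by
  -- evaluating `μ` at `‖ξ‖ ^ 2` instead of `‖ξ‖` keeps the cutoff smooth at the origin
  let μ : ContDiffBump (5 / 2 : ℝ) := ⟨1, 3 / 2, by norm_num, by norm_num⟩
  let χ : ContDiffBump (0 : Ed d) := ⟨1 / 4, 1 / 2, by norm_num, by norm_num⟩
  have hμ0 : ∀ r, r ≤ 1 → μ r = 0 := fun r hr => by
    refine μ.zero_of_le_dist ?_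
    rw [Real.dist_eq, abs_of_nonpos (by linarith)]
    simp only [μ]; linarith
  have hμ4 : ∀ r, 4 ≤ r → μ r = 0 := fun r hr => by
    refine μ.zero_of_le_dist ?_
    rw [Real.dist_eq, abs_of_nonneg (by linarith)]
    simp only [μ]; linarith
  have hms : HasCompactSupport fun ξ : Ed d => ((μ (‖ξ‖ ^ 2) : ℝ) : ℂ) := by
    refine HasCompactSupport.intro (isCompact_closedBall (0 : Ed d) 2) fun ξ hξ => ?_
    have h2 : 2 < ‖ξ‖ := by simpa using hξ
    rw [hμ4 _ (by nlinarith), Complex.ofReal_zero]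
  have hmd : ContDiff ℝ ((⊤ : ℕ∞) : WithTop ℕ∞) fun ξ : Ed d => ((μ (‖ξ‖ ^ 2) : ℝ) : ℂ) :=
    Complex.ofRealCLM.contDiff.comp (μ.contDiff.comp (contDiff_norm_sq ℝ))
  have hcs : HasCompactSupport fun ξ : Ed d => ((χ ξ : ℝ) : ℂ) :=
    χ.hasCompactSupport.comp_left (g := fun r : ℝ => (r : ℂ)) Complex.ofReal_zero
  have hcd : ContDiff ℝ ((⊤ : ℕ∞) : WithTop ℕ∞) fun ξ : Ed d => ((χ ξ : ℝ) : ℂ) :=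
    Complex.ofRealCLM.contDiff.comp χ.contDiff
  set mS : 𝓢(Ed d, ℂ) := hms.toSchwartzMap hmd
  set cS : 𝓢(Ed d, ℂ) := hcs.toSchwartzMap hcd
  have hK : ∀ ξ, 𝓕 (𝓕⁻ mS) ξ = ((μ (‖ξ‖ ^ 2) : ℝ) : ℂ) := fun ξ => by
    rw [FourierTransform.fourier_fourierInv_eq]; rfl
  have hk : ∀ ξ, 𝓕 (𝓕⁻ cS) ξ = ((χ ξ : ℝ) : ℂ) := fun ξ => by
    rw [FourierTransform.fourier_fourierInv_eq]; rfl
  obtain ⟨C, hC0, hC⟩ := scaled_estimate (𝓕⁻ mS) (𝓕⁻ cS)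
    (fun ξ h => by rw [hK, hμ0 _ (by nlinarith [norm_nonneg ξ]), Complex.ofReal_zero])
    (fun ξ h => by
      rw [hk, χ.zero_of_le_dist (by simpa [χ] using h), Complex.ofReal_zero])
  refine ⟨fun r => μ (r ^ 2) ^ 2, (μ.continuous.comp (continuous_pow 2)).pow 2,
    fun r => sq_nonneg _, fun r => pow_le_one₀ μ.nonneg μ.le_one, fun r h0 h1 => ?_,
    ⟨√(5 / 2), by positivity, ?_⟩, C, hC0, fun u f U F hu hU hU0 hF hF0 t ht => ?_⟩
  · simp only []
    rw [hμ0 _ (by nlinarith)]; simp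
  · simp only []
    rw [Real.sq_sqrt (by norm_num), μ.one_of_mem_closedBall (by simp [μ])]; simp
  have h := hC u f U F hu hU hU0 hF hF0 t ht
  have hts : ∀ ξ : Ed d, ‖t • ξ‖ = t * ‖ξ‖ := fun ξ => by
    rw [norm_smul, Real.norm_of_nonneg ht.le]
  have hind0 : ∀ ξ : Ed d, 0 ≤ (Set.Ioi (1 / 4 : ℝ)).indicator (1 : ℝ → ℝ) (t * ‖ξ‖) := fun ξ =>
    Set.indicator_nonneg (fun _ _ => zero_le_one) _
  have hind1 : ∀ ξ : Ed d, (Set.Ioi (1 / 4 : ℝ)).indicator (1 : ℝ → ℝ) (t * ‖ξ‖) ≤ 1 := fun ξ =>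
    Set.indicator_le_self' (fun _ _ => zero_le_one) _
  have hmono : ∀ (a : 𝓢(Ed d, ℂ)) (m : Ed d → ℂ), (∀ ξ, ‖m ξ‖ ≤ 1) →
      (∀ ξ, t * ‖ξ‖ ≤ 1 / 4 → m ξ = 0) →
      √(∫ ξ, ‖m ξ‖ ^ 2 * ‖𝓕 a ξ‖ ^ 2) ≤
        √(∫ ξ, (Set.Ioi (1 / 4 : ℝ)).indicator 1 (t * ‖ξ‖) * ‖𝓕 a ξ‖ ^ 2) := by
    intro a m hm1 hm0
    refine Real.sqrt_le_sqrt (integral_mono_of_nonneg (Filter.Eventually.of_forall fun ξ => by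
      positivity) ?_ (Filter.Eventually.of_forall fun ξ => ?_))
    · have hi : Integrable fun ξ => ‖𝓕 a ξ‖ ^ 2 := by
        have := ((𝓕 a).memLp 2 volume).integrable_norm_pow (by norm_num)
        simpa using this
      refine hi.bdd_mul (c := 1) ?_ (Filter.Eventually.of_forall fun ξ => ?_)
      · exact ((measurable_one.indicator measurableSet_Ioi).comp
          (measurable_norm.const_mul t)).aestronglyMeasurable
      · rw [Real.norm_of_nonneg (hind0 ξ)]; exact hind1 ξ
    · simp only []
      rcases le_or_gt (t * ‖ξ‖) (1 / 4) with h1 | h1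
      · rw [hm0 ξ h1]
        simpa using mul_nonneg (hind0 ξ) (sq_nonneg ‖𝓕 a ξ‖)
      · rw [Set.indicator_of_mem (show t * ‖ξ‖ ∈ Set.Ioi (1 / 4 : ℝ) from h1)]
        simp only [Pi.one_apply]
        gcongr
        exact pow_le_one₀ (norm_nonneg _) (hm1 ξ)
  have hm : ∀ a, _ := fun a => hmono a (fun ξ => 𝓕 (𝓕⁻ mS) (t • ξ))
    (fun ξ => by simp only [hK]; rw [Complex.norm_real, Real.norm_of_nonneg μ.nonneg]; exact μ.le_one)
    (fun ξ hξ => by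
      simp only [hK]
      rw [hts, hμ0 _ (by nlinarith [mul_nonneg ht.le (norm_nonneg ξ)]), Complex.ofReal_zero])
  have hx : ∀ a, _ := fun a => hmono a (fun ξ => 1 - 𝓕 (𝓕⁻ cS) (t • ξ))
    (fun ξ => by
      simp only [hk]
      rw [← Complex.ofReal_one, ← Complex.ofReal_sub, Complex.norm_real,
        Real.norm_of_nonneg (sub_nonneg.2 χ.le_one)]
      linarith [χ.nonneg (x := t • ξ)])
    (fun ξ hξ => by
      simp only [hk]
      rw [χ.one_of_mem_closedBall (by simpa [χ, hts] using hξ), Complex.ofReal_one, sub_self])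
  have hL : ∀ ξ, ((‖𝓕 (𝓕⁻ mS) (t • ξ)‖ ^ 2 : ℝ) : ℂ) *
      (conj (𝓕 f ξ) * 𝓕 (adv (fun i => toC (u i)) f) ξ)
      = (fun r => μ (r ^ 2) ^ 2) (t * ‖ξ‖) •
        (conj (𝓕 f ξ) * 𝓕 (adv (fun i => toC (u i)) f) ξ) := fun ξ => by
    simp only [hK]
    rw [Complex.norm_real, Real.norm_of_nonneg μ.nonneg, hts, Complex.real_smul]
  rw [integral_congr_ae (Filter.Eventually.of_forall hL)] at h
  refine h.trans (mul_le_mul_of_nonneg_left ?_ hC0)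
  refine mul_le_mul (hm f) (add_le_add (mul_le_mul_of_nonneg_left (hx f) hU0)
    (mul_le_mul_of_nonneg_left (Finset.sum_le_sum fun i _ => hx _) hF0)) ?_ (Real.sqrt_nonneg _)
  exact add_nonneg (mul_nonneg hU0 (Real.sqrt_nonneg _))
    (mul_nonneg hF0 (Finset.sum_nonneg fun i _ => Real.sqrt_nonneg _))

/-- The scaling identity `∫₀^∞ t^(-2s-1) φ(t|ξ|) dt = c |ξ|^(2s)`, integrated against `H`. Since `φ`
vanishes near the origin, every integral converges absolutely. -/
lemma scale_integral {V : Type*} [NormedAddCommGroup V] [NormedSpace ℝ V] [CompleteSpace V] {s : ℝ}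
    (hs : 0 < s) (φ : ℝ → ℝ) (hφm : Measurable φ) (hφ0 : ∀ r, 0 ≤ φ r) (hφ1 : ∀ r, φ r ≤ 1)
    (hφ : ∀ r, 0 ≤ r → r ≤ 1 / 4 → φ r = 0) (H : Ed d → V) (hH : Continuous H)
    (hHi : Integrable fun ξ => ‖ξ‖ ^ (2 * s) * ‖H ξ‖) :
    IntegrableOn (fun t : ℝ => t ^ (-2 * s - 1) * φ t) (Set.Ioi 0) ∧
    IntegrableOn (fun t : ℝ => t ^ (-2 * s - 1) • ∫ ξ, φ (t * ‖ξ‖) • H ξ) (Set.Ioi 0) ∧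
    ∫ t in Set.Ioi (0 : ℝ), t ^ (-2 * s - 1) • ∫ ξ, φ (t * ‖ξ‖) • H ξ
      = (∫ t in Set.Ioi (0 : ℝ), t ^ (-2 * s - 1) * φ t) • ∫ ξ, ‖ξ‖ ^ (2 * s) • H ξ := by
  have hwm : Measurable fun t : ℝ => t ^ (-2 * s - 1) := by fun_prop
  have ha : IntegrableOn (fun t : ℝ => t ^ (-2 * s - 1) * φ t) (Set.Ioi 0) := by
    have h1 : IntegrableOn (fun t : ℝ => t ^ (-2 * s - 1)) (Set.Ioi (1 / 4)) :=
      integrableOn_Ioi_rpow_of_lt (by linarith) (by norm_num)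
    have h2 : IntegrableOn (fun t : ℝ => t ^ (-2 * s - 1) * φ t) (Set.Ioi (1 / 4)) :=
      Integrable.mul_bdd (c := 1) h1 hφm.aestronglyMeasurable (Filter.Eventually.of_forall fun r => by
        rw [Real.norm_of_nonneg (hφ0 r)]; exact hφ1 r)
    have h3 : IntegrableOn (fun t : ℝ => t ^ (-2 * s - 1) * φ t) (Set.Ioc 0 (1 / 4)) :=
      integrableOn_zero.congr_fun (fun t ht => by simp [hφ t ht.1.le ht.2]) measurableSet_Ioc
    rw [← Set.Ioc_union_Ioi_eq_Ioi (show (0 : ℝ) ≤ 1 / 4 by norm_num)]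
    exact h3.union h2
  have hsc : ∀ r : ℝ, 0 ≤ r → IntegrableOn (fun t : ℝ => t ^ (-2 * s - 1) * φ (t * r)) (Set.Ioi 0) ∧
      ∫ t in Set.Ioi (0 : ℝ), t ^ (-2 * s - 1) * φ (t * r)
        = (∫ t in Set.Ioi (0 : ℝ), t ^ (-2 * s - 1) * φ t) * r ^ (2 * s) := by
    intro r hr
    rcases hr.eq_or_lt with rfl | hr
    · simp [hφ 0 le_rfl (by norm_num), Real.zero_rpow (show 2 * s ≠ 0 by positivity)]
    have he : ∀ t ∈ Set.Ioi (0 : ℝ), r ^ (2 * s + 1) * ((r * t) ^ (-2 * s - 1) * φ (r * t))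
        = t ^ (-2 * s - 1) * φ (t * r) := fun t ht => by
      rw [Real.mul_rpow hr.le (le_of_lt ht), mul_comm r t]
      have : r ^ (2 * s + 1) * r ^ (-2 * s - 1) = 1 := by
        rw [← Real.rpow_add hr, show 2 * s + 1 + (-2 * s - 1) = 0 by ring, Real.rpow_zero]
      linear_combination (t ^ (-2 * s - 1) * φ (t * r)) * this
    constructor
    · refine IntegrableOn.congr_fun ?_ he measurableSet_Ioi
      refine Integrable.const_mul ?_ _
      have := (integrableOn_Ioi_comp_mul_left_iff (fun t : ℝ => t ^ (-2 * s - 1) * φ t) 0 hr).2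
        (by simpa using ha)
      exact this
    · rw [← setIntegral_congr_fun measurableSet_Ioi he, integral_const_mul,
        integral_comp_mul_left_Ioi (fun t : ℝ => t ^ (-2 * s - 1) * φ t) 0 hr, mul_zero,
        smul_eq_mul, Real.rpow_add hr, Real.rpow_one]
      field_simp
  have hint : Integrable (fun p : ℝ × Ed d => (p.1 ^ (-2 * s - 1) * φ (p.1 * ‖p.2‖)) • H p.2)
      ((volume.restrict (Set.Ioi 0)).prod volume) := by
    have hm : AEStronglyMeasurable
        (fun p : ℝ × Ed d => (p.1 ^ (-2 * s - 1) * φ (p.1 * ‖p.2‖)) • H p.2)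
        ((volume.restrict (Set.Ioi 0)).prod volume) := by
      refine AEStronglyMeasurable.smul ?_ (hH.comp continuous_snd).aestronglyMeasurable
      refine Measurable.aestronglyMeasurable ?_
      exact (hwm.comp measurable_fst).mul
        (hφm.comp (measurable_fst.mul (measurable_norm.comp measurable_snd)))
    rw [integrable_prod_iff' hm]
    constructor
    · refine Filter.Eventually.of_forall fun ξ => ?_
      exact (hsc ‖ξ‖ (norm_nonneg _)).1.smul_const (H ξ)
    · have h1 : ∀ ξ : Ed d, ∫ t in Set.Ioi (0 : ℝ),
          ‖(t ^ (-2 * s - 1) * φ (t * ‖ξ‖)) • H ξ‖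
          = (∫ t in Set.Ioi (0 : ℝ), t ^ (-2 * s - 1) * φ t) * (‖ξ‖ ^ (2 * s) * ‖H ξ‖) := by
        intro ξ
        rw [← mul_assoc, ← (hsc ‖ξ‖ (norm_nonneg _)).2, ← integral_mul_const]
        refine setIntegral_congr_fun measurableSet_Ioi fun t ht => ?_
        rw [norm_smul, Real.norm_of_nonneg]
        exact mul_nonneg (Real.rpow_nonneg (le_of_lt ht) _) (hφ0 _)
      simp only [h1]
      exact hHi.const_mul _
  refine ⟨ha, ?_, ?_⟩
  · have := hint.integral_prod_left
    refine this.congr (Filter.Eventually.of_forall fun t => ?_)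
    simp only [mul_smul]
    exact integral_smul _ _
  · have h1 := integral_integral_swap (f := fun t ξ => (t ^ (-2 * s - 1) * φ (t * ‖ξ‖)) • H ξ) hint
    have h2 : ∀ t : ℝ, ∫ ξ, (t ^ (-2 * s - 1) * φ (t * ‖ξ‖)) • H ξ
        = t ^ (-2 * s - 1) • ∫ ξ, φ (t * ‖ξ‖) • H ξ := fun t => by
      simp only [mul_smul]
      exact integral_smul _ _
    simp only [h2] at h1
    rw [h1, ← integral_smul]
    refine integral_congr_ae (Filter.Eventually.of_forall fun ξ => ?_)
    simp only []
    rw [integral_smul_const, (hsc ‖ξ‖ (norm_nonneg _)).2, mul_smul]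

/-! ### The estimate on the Fourier side -/

lemma integrable_rpow_mul_norm (a : 𝓢(Ed d, ℂ)) {r : ℝ} (hr : 0 ≤ r) :
    Integrable fun ξ => ‖ξ‖ ^ r * ‖a ξ‖ := by
  obtain ⟨n, hn⟩ := exists_nat_ge r
  refine (a.integrable.norm.add (a.integrable_pow_mul volume n)).mono' ?_
    (Filter.Eventually.of_forall fun ξ => ?_)
  · exact ((continuous_norm.rpow_const fun _ => Or.inr hr).mul a.continuous.norm).aestronglyMeasurable
  · rw [Real.norm_of_nonneg (by positivity)]
    have : ‖ξ‖ ^ r ≤ 1 + ‖ξ‖ ^ n := by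
      rcases le_total ‖ξ‖ 1 with h | h
      · have := Real.rpow_le_one (norm_nonneg ξ) h hr
        have h2 : 0 ≤ ‖ξ‖ ^ n := by positivity
        linarith
      · have := Real.rpow_le_rpow_of_exponent_le h hn
        rw [Real.rpow_natCast] at this
        linarith
    calc ‖ξ‖ ^ r * ‖a ξ‖ ≤ (1 + ‖ξ‖ ^ n) * ‖a ξ‖ := by gcongr
      _ = _ := by simp only [Pi.add_apply]; ring

lemma integrable_rpow_mul_norm_mul (a b : 𝓢(Ed d, ℂ)) {r : ℝ} (hr : 0 ≤ r) :
    Integrable fun ξ => ‖ξ‖ ^ r * (‖a ξ‖ * ‖b ξ‖) := by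
  have := integrable_rpow_mul_norm (pmul a b) hr
  simpa only [pmul_apply, norm_mul] using this

/-- The Cauchy–Schwarz inequality. -/
lemma integral_sqrt_mul_sqrt_le {ν : Measure ℝ} {a b : ℝ → ℝ} (ha : Integrable a ν)
    (hb : Integrable b ν) (ha0 : 0 ≤ᵐ[ν] a) (hb0 : 0 ≤ᵐ[ν] b) :
    Integrable (fun t => √(a t) * √(b t)) ν ∧
      ∫ t, √(a t) * √(b t) ∂ν ≤ √(∫ t, a t ∂ν) * √(∫ t, b t ∂ν) := by
  have key : ∀ {c : ℝ → ℝ}, Integrable c ν → 0 ≤ᵐ[ν] c → MemLp (fun t => √(c t)) 2 ν := by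
    intro c hc hc0
    refine (memLp_two_iff_integrable_sq
      (Real.continuous_sqrt.comp_aestronglyMeasurable hc.aestronglyMeasurable)).2 ?_
    refine hc.congr ?_
    filter_upwards [hc0] with t ht
    rw [Real.sq_sqrt ht]
  have key2 : ∀ {c : ℝ → ℝ}, 0 ≤ᵐ[ν] c → ∫ t, √(c t) ^ (2 : ℝ) ∂ν = ∫ t, c t ∂ν := by
    intro c hc0
    refine integral_congr_ae ?_
    filter_upwards [hc0] with t ht
    rw [Real.rpow_two, Real.sq_sqrt ht]
  refine ⟨(key ha ha0).integrable_mul (key hb hb0), ?_⟩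
  have := integral_mul_le_Lp_mul_Lq_of_nonneg (μ := ν) (p := 2) (q := 2)
    (Real.HolderConjugate.two_two) (f := fun t => √(a t)) (g := fun t => √(b t))
    (Filter.Eventually.of_forall fun t => Real.sqrt_nonneg _)
    (Filter.Eventually.of_forall fun t => Real.sqrt_nonneg _)
    (by simpa using key ha ha0) (by simpa using key hb hb0)
  rw [key2 ha0, key2 hb0, ← Real.sqrt_eq_rpow, ← Real.sqrt_eq_rpow] at this
  exact this

/-- The commutator estimate on the Fourier side: integrate the estimate at scale `t` against
`t^(-2s-1) dt`, and use Cauchy–Schwarz in `t`. -/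
lemma freq_estimate (d : ℕ) {s : ℝ} (hs : 0 < s) : ∃ C : ℝ, 0 ≤ C ∧
    ∀ (u : Fin d → 𝓢(Ed d, ℝ)) (f : 𝓢(Ed d, ℂ)) (U F : ℝ), DivFree u →
      (∀ i x v, |fderiv ℝ (u i) x v| ≤ U * ‖v‖) → 0 ≤ U →
      (∀ (i : Fin d) x, ‖(∂_{bas i} f : 𝓢(Ed d, ℂ)) x‖ ≤ F) → 0 ≤ F →
      |(∫ ξ, ‖ξ‖ ^ (2 * s) • (conj (𝓕 f ξ) * 𝓕 (adv (fun i => toC (u i)) f) ξ)).re|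
        ≤ C * (√(∫ ξ, ‖ξ‖ ^ (2 * s) * ‖𝓕 f ξ‖ ^ 2) *
          (U * √(∫ ξ, ‖ξ‖ ^ (2 * s) * ‖𝓕 f ξ‖ ^ 2)
          + F * ∑ i, √(∫ ξ, ‖ξ‖ ^ (2 * s) * ‖𝓕 (toC (u i)) ξ‖ ^ 2))) := by
  obtain ⟨φ, hφc, hφ0, hφ1, hφ, ⟨r0, hr0, hφr⟩, C, hC0, hC⟩ := localized_estimate d
  set P : ℝ → ℝ := (Set.Ioi (1 / 4 : ℝ)).indicator 1
  have hPm : Measurable P := measurable_one.indicator measurableSet_Ioi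
  have hP0 : ∀ r, 0 ≤ P r := fun r => Set.indicator_nonneg (fun _ _ => zero_le_one) _
  have hP1 : ∀ r, P r ≤ 1 := fun r => Set.indicator_le_self' (fun _ _ => zero_le_one) _
  have hPz : ∀ r, 0 ≤ r → r ≤ 1 / 4 → P r = 0 := fun r _ h =>
    Set.indicator_of_notMem (by simpa using h) _
  set ν := (volume : Measure ℝ).restrict (Set.Ioi 0)
  set w : ℝ → ℝ := fun t => t ^ (-2 * s - 1)
  set c0 := ∫ t, w t * φ t ∂ν with hc0
  set c1 := ∫ t, w t * P t ∂ν with hc1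
  have hw0 : ∀ᵐ t ∂ν, 0 ≤ w t := by
    filter_upwards [ae_restrict_mem measurableSet_Ioi] with t ht
    exact Real.rpow_nonneg (le_of_lt ht) _
  have hc1nn : 0 ≤ c1 := integral_nonneg_of_ae (by
    filter_upwards [hw0] with t ht using mul_nonneg ht (hP0 t))
  have h2s : 0 ≤ 2 * s := by positivity
  have hsq : ∀ a : 𝓢(Ed d, ℂ), Continuous fun ξ => ‖𝓕 a ξ‖ ^ 2 := fun a =>
    (𝓕 a).continuous.norm.pow 2
  have hsqi : ∀ a : 𝓢(Ed d, ℂ), Integrable fun ξ => ‖ξ‖ ^ (2 * s) * ‖‖𝓕 a ξ‖ ^ 2‖ := fun a => by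
    have := integrable_rpow_mul_norm_mul (𝓕 a) (𝓕 a) h2s
    simpa only [sq, norm_mul, norm_norm] using this
  have hc0pos : 0 < c0 := by
    have hi := (scale_integral (d := d) hs φ hφc.measurable hφ0 hφ1 hφ (0 : Ed d → ℝ)
      continuous_zero (by simp)).1
    rw [hc0, setIntegral_pos_iff_support_of_nonneg_ae
      (by filter_upwards [hw0] with t ht using mul_nonneg ht (hφ0 t)) hi]
    have ho : IsOpen (Set.Ioi 0 ∩ {t | φ t ≠ 0}) :=
      isOpen_Ioi.inter (isOpen_ne_fun hφc continuous_const)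
    refine (ho.measure_pos volume ⟨r0, hr0, by simp [hφr]⟩).trans_le (measure_mono ?_)
    rintro t ⟨ht, ht2⟩
    exact ⟨mul_ne_zero (Real.rpow_pos_of_pos ht _).ne' ht2, ht⟩
  refine ⟨c0⁻¹ * (C * c1), by positivity, fun u f U F hu hU hU0 hF hF0 => ?_⟩
  set H : Ed d → ℂ := fun ξ => conj (𝓕 f ξ) * 𝓕 (adv (fun i => toC (u i)) f) ξ
  have hH := scale_integral (d := d) hs φ hφc.measurable hφ0 hφ1 hφ H
    ((Complex.continuous_conj.comp (𝓕 f).continuous).mul (SchwartzMap.continuous _))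
    (by
      have := integrable_rpow_mul_norm_mul (𝓕 f) (𝓕 (adv (fun i => toC (u i)) f)) h2s
      simpa only [H, norm_mul, RCLike.norm_conj] using this)
  -- `N a t` is the energy of `a` at frequencies above `1 / (4 t)`
  set N : 𝓢(Ed d, ℂ) → ℝ → ℝ := fun a t => ∫ ξ, P (t * ‖ξ‖) * ‖𝓕 a ξ‖ ^ 2
  have hN0 : ∀ a t, 0 ≤ N a t := fun a t =>
    integral_nonneg fun ξ => mul_nonneg (hP0 _) (sq_nonneg _)
  have hN : ∀ a, Integrable (fun t => w t * N a t) ν ∧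
      ∫ t, w t * N a t ∂ν = c1 * ∫ ξ, ‖ξ‖ ^ (2 * s) * ‖𝓕 a ξ‖ ^ 2 := fun a =>
    (scale_integral (d := d) hs P hPm hP0 hP1 hPz _ (hsq a) (hsqi a)).2
  have hNae : ∀ a, 0 ≤ᵐ[ν] fun t => w t * N a t := fun a => by
    filter_upwards [hw0] with t ht using mul_nonneg ht (hN0 a t)
  have hCS : ∀ i, _ := fun i => integral_sqrt_mul_sqrt_le (hN f).1 (hN (toC (u i))).1 (hNae f)
    (hNae (toC (u i)))
  have hre : c0 * (∫ ξ, ‖ξ‖ ^ (2 * s) • H ξ).re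
      = ∫ t, (w t • ∫ ξ, φ (t * ‖ξ‖) • H ξ).re ∂ν := by
    have h1 := Complex.reCLM.integral_comp_comm hH.2.1
    simp only [Complex.reCLM_apply] at h1
    rw [h1, hH.2.2, Complex.smul_re, smul_eq_mul]
  have hb : ∀ᵐ t ∂ν, ‖(w t • ∫ ξ, φ (t * ‖ξ‖) • H ξ).re‖ ≤ C * (U * (w t * N f t)
      + F * ∑ i, √(w t * N f t) * √(w t * N (toC (u i)) t)) := by
    filter_upwards [hw0, ae_restrict_mem measurableSet_Ioi] with t hwt ht
    rw [Complex.smul_re, smul_eq_mul, norm_mul, Real.norm_of_nonneg hwt, Real.norm_eq_abs]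
    refine (mul_le_mul_of_nonneg_left (hC u f U F hu hU hU0 hF hF0 t ht) hwt).trans (le_of_eq ?_)
    have e1 : ∀ i, √(w t * N f t) * √(w t * N (toC (u i)) t)
        = w t * √(N f t) * √(N (toC (u i)) t) := fun i => by
      rw [Real.sqrt_mul hwt, Real.sqrt_mul hwt]
      linear_combination (√(N f t) * √(N (toC (u i)) t)) * Real.mul_self_sqrt hwt
    simp_rw [e1]
    rw [← Finset.mul_sum]
    linear_combination (C * w t * U) * Real.mul_self_sqrt (hN0 f t)
  have hint : Integrable (fun t => C * (U * (w t * N f t)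
      + F * ∑ i, √(w t * N f t) * √(w t * N (toC (u i)) t))) ν :=
    (((hN f).1.const_mul U).add
      ((integrable_finsetSum _ fun i _ => (hCS i).1).const_mul F)).const_mul C
  have hfin := norm_integral_le_of_norm_le hint hb
  rw [← hre, integral_const_mul, integral_add ((hN f).1.const_mul U)
    ((integrable_finsetSum _ fun i _ => (hCS i).1).const_mul F), integral_const_mul,
    integral_const_mul, integral_finsetSum _ fun i _ => (hCS i).1, (hN f).2, norm_mul,
    Real.norm_of_nonneg hc0pos.le, Real.norm_eq_abs] at hfin
  set β := ∫ ξ, ‖ξ‖ ^ (2 * s) * ‖𝓕 f ξ‖ ^ 2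
  have hβ : 0 ≤ β := integral_nonneg fun ξ => by positivity
  have hsum : ∑ i, ∫ t, √(w t * N f t) * √(w t * N (toC (u i)) t) ∂ν
      ≤ ∑ i, c1 * (√β * √(∫ ξ, ‖ξ‖ ^ (2 * s) * ‖𝓕 (toC (u i)) ξ‖ ^ 2)) := by
    refine Finset.sum_le_sum fun i _ => (hCS i).2.trans (le_of_eq ?_)
    rw [(hN f).2, (hN (toC (u i))).2, Real.sqrt_mul hc1nn, Real.sqrt_mul hc1nn]
    linear_combination (√β * √(∫ ξ, ‖ξ‖ ^ (2 * s) * ‖𝓕 (toC (u i)) ξ‖ ^ 2))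
      * Real.mul_self_sqrt hc1nn
  rw [← Finset.mul_sum, ← Finset.mul_sum] at hsum
  have hfin2 := hfin.trans (mul_le_mul_of_nonneg_left
    (add_le_add_right (mul_le_mul_of_nonneg_left hsum hF0) (U * (c1 * β))) hC0)
  rw [mul_assoc, ← div_eq_inv_mul, le_div_iff₀ hc0pos, mul_comm]
  refine hfin2.trans (le_of_eq ?_)
  linear_combination (-(C * c1 * U)) * Real.mul_self_sqrt hβ

/-! ### Plancherel and regularity for the operator `Λ^s` -/

/-- The inverse Fourier integral is self-adjoint for the bilinear pairing. -/
lemma integral_fourierInv_mul_eq (G : 𝓢(Ed d, ℂ)) {H : Ed d → ℂ} (hi : Integrable H) :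
    ∫ x, (𝓕⁻ G) x * H x = ∫ x, G x * 𝓕⁻ H x := by
  have h1 := VectorFourier.integral_fourierIntegral_smul_eq_flip (L := -innerₗ (Ed d))
    (μ := volume) (ν := volume) (f := G) (g := H)
    Real.continuous_fourierChar (by exact continuous_inner.neg) G.integrable hi
  have h2 : (-innerₗ (Ed d)).flip = -innerₗ (Ed d) := by
    ext x y
    simp [real_inner_comm]
  rw [h2] at h1
  rw [SchwartzMap.fourierInv_coe]
  exact h1

lemma continuous_fourierInv {H : Ed d → ℂ} (hi : Integrable H) : Continuous (𝓕⁻ H) :=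
  VectorFourier.fourierIntegral_continuous (L := -innerₗ (Ed d)) Real.continuous_fourierChar
    (by exact continuous_inner.neg) hi

/-- On `L¹ ∩ L²` the inverse Fourier integral agrees with the `L²` inverse Fourier transform; this
is checked by testing against compactly supported smooth functions. -/
lemma fourierInv_toLp_ae {H : Ed d → ℂ} (hi : Integrable H) (h2 : MemLp H 2) :
    ((𝓕⁻ (h2.toLp H) : Lp ℂ 2 (volume : Measure (Ed d))) : Ed d → ℂ) =ᵐ[volume] 𝓕⁻ H := by
  refine ae_eq_of_integral_contDiff_smul_eq ?_ ?_ ?_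
  · exact (Lp.memLp _).locallyIntegrable (by norm_num)
  · exact (continuous_fourierInv hi).locallyIntegrable
  · intro g hg hc
    let G : 𝓢(Ed d, ℂ) := (hc.comp_left (g := fun t : ℝ => (t : ℂ)) (by simp)).toSchwartzMap
      (Complex.ofRealCLM.contDiff.comp hg)
    have hG : ∀ x, G x = (g x : ℂ) := fun x => rfl
    have e1 := congrArg (fun T : 𝓢'(Ed d, ℂ) => T G)
      (Lp.fourierInv_toTemperedDistribution_eq (h2.toLp H))
    simp only [TemperedDistribution.fourierInv_apply, Lp.toTemperedDistribution_apply] at e1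
    calc ∫ x, g x • (𝓕⁻ (h2.toLp H) : Lp ℂ 2 (volume : Measure (Ed d))) x
        = ∫ x, G x • (𝓕⁻ (h2.toLp H) : Lp ℂ 2 (volume : Measure (Ed d))) x := by
          simp [hG]
      _ = ∫ x, (𝓕⁻ G) x • (h2.toLp H) x := e1.symm
      _ = ∫ x, (𝓕⁻ G) x * H x := by
          refine integral_congr_ae ?_
          filter_upwards [h2.coeFn_toLp] with x hx
          rw [hx]; rfl
      _ = ∫ x, G x * 𝓕⁻ H x := integral_fourierInv_mul_eq G hi
      _ = ∫ x, g x • 𝓕⁻ H x := by simp [hG]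

/-- Plancherel's identity for the inverse Fourier integral on `L¹ ∩ L²`. -/
lemma plancherel_inv {H K : Ed d → ℂ} (hi : Integrable H) (h2 : MemLp H 2) (ki : Integrable K)
    (k2 : MemLp K 2) :
    Integrable (fun x => conj (𝓕⁻ H x) * 𝓕⁻ K x) ∧
      ∫ x, conj (𝓕⁻ H x) * 𝓕⁻ K x = ∫ ξ, conj (H ξ) * K ξ := by
  have a1 := fourierInv_toLp_ae hi h2
  have a2 := fourierInv_toLp_ae ki k2
  have e : (fun x => inner ℂ ((𝓕⁻ (h2.toLp H) : Lp ℂ 2 (volume : Measure (Ed d))) x)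
      ((𝓕⁻ (k2.toLp K) : Lp ℂ 2 (volume : Measure (Ed d))) x))
      =ᵐ[volume] fun x => conj (𝓕⁻ H x) * 𝓕⁻ K x := by
    filter_upwards [a1, a2] with x hx hy
    rw [hx, hy, RCLike.inner_apply, mul_comm]
  refine ⟨(L2.integrable_inner (𝕜 := ℂ) _ _).congr e, ?_⟩
  rw [← integral_congr_ae e, ← L2.inner_def, ← Lp.inner_fourier_eq,
    FourierTransform.fourier_fourierInv_eq, FourierTransform.fourier_fourierInv_eq, L2.inner_def]
  refine integral_congr_ae ?_
  filter_upwards [h2.coeFn_toLp, k2.coeFn_toLp] with x hx hy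
  rw [hx, hy, RCLike.inner_apply, mul_comm]

lemma fourier_regularity {G : Ed d → ℂ} (h0 : Integrable G)
    (h1 : Integrable fun ξ => ‖ξ‖ * ‖G ξ‖) :
    ContDiff ℝ 1 (𝓕 G) ∧ (∃ A, ∀ x, ‖𝓕 G x‖ ≤ A) ∧ ∃ B, ∀ x, ‖fderiv ℝ (𝓕 G) x‖ ≤ B := by
  refine ⟨Real.contDiff_fourier (N := 1) fun n hn => ?_, ⟨∫ ξ, ‖G ξ‖, fun x =>
    VectorFourier.norm_fourierIntegral_le_integral_norm _ _ _ _ _⟩,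
    ⟨∫ ξ, ‖VectorFourier.fourierSMulRight (innerSL ℝ) G ξ‖, fun x => ?_⟩⟩
  · have hn' : n ≤ 1 := by exact_mod_cast hn
    interval_cases n
    · simpa using h0.norm
    · simpa using h1
  · rw [Real.fderiv_fourier h0 h1]
    exact VectorFourier.norm_fourierIntegral_le_integral_norm _ _ _ _ _

/-- The Fourier transform of `Λ^s h`. -/
def symb (s : ℝ) (h : 𝓢(Ed d, ℝ)) (ξ : Ed d) : ℂ := ((‖ξ‖ ^ s : ℝ) : ℂ) * 𝓕 (toC h) ξ

lemma norm_symb (s : ℝ) (h : 𝓢(Ed d, ℝ)) (ξ : Ed d) : ‖symb s h ξ‖ = ‖ξ‖ ^ s * ‖𝓕 (toC h) ξ‖ := by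
  rw [symb, norm_mul, Complex.norm_real, Real.norm_of_nonneg (by positivity)]

lemma continuous_symb {s : ℝ} (hs : 0 ≤ s) (h : 𝓢(Ed d, ℝ)) : Continuous (symb s h) :=
  (Complex.continuous_ofReal.comp (continuous_norm.rpow_const fun _ => Or.inr hs)).mul
    (𝓕 (toC h)).continuous

lemma integrable_symb {s : ℝ} (hs : 0 ≤ s) (h : 𝓢(Ed d, ℝ)) : Integrable (symb s h) := by
  rw [← integrable_norm_iff (continuous_symb hs h).aestronglyMeasurable]
  simpa only [norm_symb] using integrable_rpow_mul_norm (𝓕 (toC h)) hs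

lemma integrable_norm_symb {s : ℝ} (hs : 0 ≤ s) (h : 𝓢(Ed d, ℝ)) :
    Integrable fun ξ => ‖ξ‖ * ‖symb s h ξ‖ := by
  refine (integrable_rpow_mul_norm (𝓕 (toC h)) (r := s + 1) (by linarith)).congr
    (Filter.Eventually.of_forall fun ξ => ?_)
  simp only [norm_symb]
  rw [Real.rpow_add_one' (norm_nonneg _) (by linarith)]
  ring

lemma memLp_symb {s : ℝ} (hs : 0 ≤ s) (h : 𝓢(Ed d, ℝ)) : MemLp (symb s h) 2 := by
  rw [memLp_two_iff_integrable_sq_norm (continuous_symb hs h).aestronglyMeasurable]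
  refine (integrable_rpow_mul_norm_mul (𝓕 (toC h)) (𝓕 (toC h)) (r := 2 * s) (by linarith)).congr
    (Filter.Eventually.of_forall fun ξ => ?_)
  simp only [norm_symb]
  rw [mul_comm 2 s, Real.rpow_mul (norm_nonneg _), Real.rpow_two]
  ring

lemma symb_neg (s : ℝ) (h : 𝓢(Ed d, ℝ)) (ξ : Ed d) : symb s h (-ξ) = conj (symb s h ξ) := by
  have : 𝓕 (toC h) (-ξ) = conj (𝓕 (toC h) ξ) := by
    rw [SchwartzMap.fourier_coe, Real.fourier_eq', Real.fourier_eq', ← integral_conj]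
    congr 1
    ext v
    simp only [toC_apply, smul_eq_mul, map_mul, Complex.conj_ofReal, ← Complex.exp_conj,
      Complex.conj_I, inner_neg_right]
    congr 2
    push_cast
    ring
  simp only [symb, this, norm_neg, map_mul, Complex.conj_ofReal]

/-- `Λ^s h` is real: no information is lost in taking the real part in its definition. -/
lemma fourierInv_symb (s : ℝ) (h : 𝓢(Ed d, ℝ)) (x : Ed d) :
    𝓕⁻ (symb s h) x = (LamR d s h x : ℂ) := by
  have h1 : conj (𝓕⁻ (symb s h) x) = 𝓕⁻ (symb s h) x := by
    conv_rhs => rw [Real.fourierInv_eq_fourier_comp_neg, Real.fourier_eq']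
    rw [Real.fourierInv_eq', ← integral_conj]
    congr 1
    ext v
    simp only [smul_eq_mul, map_mul, Complex.conj_ofReal, ← Complex.exp_conj,
      Complex.conj_I, symb_neg]
    congr 2
    push_cast
    ring
  rw [← Complex.conj_eq_iff_re.1 h1]
  rfl

/-- Plancherel's identity `(Λ^s h, Λ^s k) = Re ∫ |ξ|^(2s) conj (𝓕 h) 𝓕 k`. -/
lemma LamR_plancherel {s : ℝ} (hs : 0 ≤ s) (h k : 𝓢(Ed d, ℝ)) :
    Integrable (fun x => LamR d s h x * LamR d s k x) ∧
      ∫ x, LamR d s h x * LamR d s k x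
        = (∫ ξ, ‖ξ‖ ^ (2 * s) • (conj (𝓕 (toC h) ξ) * 𝓕 (toC k) ξ)).re := by
  obtain ⟨h1, h2⟩ := plancherel_inv (integrable_symb hs h) (memLp_symb hs h)
    (integrable_symb hs k) (memLp_symb hs k)
  simp only [fourierInv_symb, Complex.conj_ofReal, ← Complex.ofReal_mul] at h1 h2
  refine ⟨by simpa using h1.re, ?_⟩
  rw [integral_complex_ofReal] at h2
  have h3 := congrArg Complex.re h2
  rw [Complex.ofReal_re] at h3
  rw [h3]
  congr 2
  ext ξ
  rw [mul_comm 2 s, Real.rpow_mul (norm_nonneg _), Real.rpow_two]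
  simp only [symb, map_mul, Complex.conj_ofReal, Complex.real_smul]
  push_cast
  ring

lemma LamR_sq {s : ℝ} (hs : 0 ≤ s) (h : 𝓢(Ed d, ℝ)) :
    Integrable (fun x => LamR d s h x ^ 2) ∧
      ∫ x, LamR d s h x ^ 2 = ∫ ξ, ‖ξ‖ ^ (2 * s) * ‖𝓕 (toC h) ξ‖ ^ 2 := by
  obtain ⟨h1, h2⟩ := LamR_plancherel hs h h
  simp only [← pow_two] at h1 h2
  refine ⟨h1, ?_⟩
  rw [h2]
  have : ∀ ξ, ‖ξ‖ ^ (2 * s) • (conj (𝓕 (toC h) ξ) * 𝓕 (toC h) ξ)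
      = ((‖ξ‖ ^ (2 * s) * ‖𝓕 (toC h) ξ‖ ^ 2 : ℝ) : ℂ) := by
    intro ξ
    rw [RCLike.conj_mul, Complex.real_smul]
    push_cast
    rfl
  simp only [this]
  rw [integral_complex_ofReal, Complex.ofReal_re]

/-- `Λ^s h` is `C¹` and bounded together with its derivative, so `adv_skew` applies to it. -/
lemma LamR_regularity {s : ℝ} (hs : 0 ≤ s) (h : 𝓢(Ed d, ℝ)) :
    ContDiff ℝ 1 (LamR d s h) ∧ (∃ A, ∀ x, ‖LamR d s h x‖ ≤ A) ∧
      ∃ B, ∀ x, ‖fderiv ℝ (LamR d s h) x‖ ≤ B := by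
  have i0 := (integrable_symb hs h).comp_neg
  have i1 : Integrable fun ξ => ‖ξ‖ * ‖symb s h (-ξ)‖ := by
    simpa using (integrable_norm_symb hs h).comp_neg
  obtain ⟨h1, ⟨A, hA⟩, ⟨B, hB⟩⟩ := fourier_regularity i0 i1
  have e : LamR d s h = Complex.reCLM ∘ 𝓕 (fun ξ => symb s h (-ξ)) := by
    ext x
    rw [← Real.fourierInv_eq_fourier_comp_neg]
    rfl
  refine ⟨e ▸ Complex.reCLM.contDiff.comp h1, ⟨A, fun x => ?_⟩, ⟨‖Complex.reCLM‖ * B, fun x => ?_⟩⟩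
  · rw [e]
    exact (Complex.abs_re_le_norm _).trans (hA x)
  · rw [e, (Complex.reCLM.hasFDerivAt.comp x
      ((h1.differentiable (by simp)) x).hasFDerivAt).fderiv]
    exact (ContinuousLinearMap.opNorm_comp_le _ _).trans
      (mul_le_mul_of_nonneg_left (hB x) (norm_nonneg _))

/-! ### The commutator estimate -/

/-- The advection term `u · ∇f` of real Schwartz functions. -/
def advR (u : Fin d → 𝓢(Ed d, ℝ)) (f : 𝓢(Ed d, ℝ)) : 𝓢(Ed d, ℝ) :=
  SchwartzMap.postcompCLM (𝕜 := ℝ) Complex.reCLM (adv (fun i => toC (u i)) (toC f))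

lemma adv_toC_apply (u : Fin d → 𝓢(Ed d, ℝ)) (f : 𝓢(Ed d, ℝ)) (x : Ed d) :
    adv (fun i => toC (u i)) (toC f) x = ((∑ i, u i x * fderiv ℝ f x (bas i) : ℝ) : ℂ) := by
  rw [adv_apply]
  push_cast
  exact Finset.sum_congr rfl fun i _ => by rw [lineDeriv_toC, toC_apply]

lemma advR_apply (u : Fin d → 𝓢(Ed d, ℝ)) (f : 𝓢(Ed d, ℝ)) (x : Ed d) :
    advR u f x = ∑ i, u i x * fderiv ℝ f x (bas i) := by
  have : advR u f x = (adv (fun i => toC (u i)) (toC f) x).re := rfl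
  rw [this, adv_toC_apply, Complex.ofReal_re]

lemma toC_advR (u : Fin d → 𝓢(Ed d, ℝ)) (f : 𝓢(Ed d, ℝ)) :
    toC (advR u f) = adv (fun i => toC (u i)) (toC f) := by
  ext x
  rw [toC_apply, advR_apply, adv_toC_apply]

/-- The derivative of a Schwartz function is bounded; this makes the suprema in the estimate honest
ones rather than the default value `0`. -/
lemma exists_fderiv_bound (h : 𝓢(Ed d, ℝ)) : ∃ B : ℝ, 0 ≤ B ∧ ∀ x (i : Fin d),
    (fderiv ℝ h x (bas i)) ^ 2 ≤ B := by
  obtain ⟨C, hC0, hC⟩ := h.decay 0 1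
  refine ⟨C ^ 2, by positivity, fun x i => ?_⟩
  have h2 : ‖fderiv ℝ h x‖ ≤ C := by simpa using hC x
  have h3 := (fderiv ℝ h x).le_opNorm (bas i)
  rw [PiLp.norm_single, norm_one, mul_one, Real.norm_eq_abs] at h3
  exact sq_le_sq.2 ((h3.trans h2).trans (le_abs_self C))

lemma abs_apply_le (L : Ed d →L[ℝ] ℝ) (v : Ed d) :
    |L v| ≤ √(∑ i, L (bas i) ^ 2) * ‖v‖ := by
  have hv : v = ∑ i, v i • bas i := by
    ext j
    simp [Finset.sum_apply, Pi.single_apply]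
  have h1 : L v = ∑ i, L (bas i) * v i := by
    conv_lhs => rw [hv]
    simp [mul_comm]
  rw [h1, EuclideanSpace.norm_eq]
  simp only [Real.norm_eq_abs, sq_abs]
  rw [← Real.sqrt_mul (by positivity)]
  exact Real.abs_le_sqrt (Finset.sum_mul_sq_le_sq_mul_sq _ _ _)

lemma final_arith {C D a U F b β : ℝ} (hC : 0 ≤ C) (hD : 0 ≤ D) (ha : 0 ≤ a) (hU : 0 ≤ U)
    (hF : 0 ≤ F) (hβ : 0 ≤ β) (hb : b ≤ D * β) :
    C * (a * (U * a + F * b)) ≤ (C * (D + 1) + 1) * (U * a + β * F) * a := by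
  have h1 : U * a + F * b ≤ (D + 1) * (U * a + β * F) := by
    have : F * b ≤ F * (D * β) := by gcongr
    have e : 0 ≤ D * (U * a) + β * F := by positivity
    nlinarith
  calc C * (a * (U * a + F * b)) ≤ C * (a * ((D + 1) * (U * a + β * F))) := by gcongr
    _ = C * (D + 1) * (U * a + β * F) * a := by ring
    _ ≤ (C * (D + 1) + 1) * (U * a + β * F) * a := by
      gcongr
      linarith

/-- The commutator term is the pairing of `Λ^s (u · ∇f)` with `Λ^s f`, as the other half vanishes
by skew-symmetry of `u · ∇`. -/
lemma commutator_integral {s : ℝ} (hs : 0 ≤ s) (u : Fin d → 𝓢(Ed d, ℝ)) (hu : DivFree u)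
    (f : 𝓢(Ed d, ℝ)) :
    ∫ x : Ed d, (LamR d s (fun y => ∑ i, u i y * fderiv ℝ f y (bas i)) x
        - ∑ i, u i x * fderiv ℝ (LamR d s f) x (bas i)) * LamR d s f x
      = (∫ ξ, ‖ξ‖ ^ (2 * s) • (conj (𝓕 (toC f) ξ) * 𝓕 (adv (fun i => toC (u i)) (toC f)) ξ)).re := by
  obtain ⟨hG, ⟨A, hA⟩, ⟨B, hB⟩⟩ := LamR_regularity hs f
  obtain ⟨k1, k2⟩ := adv_skew u hu _ hG hA hB
  obtain ⟨p1, p2⟩ := LamR_plancherel hs f (advR u f)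
  have e : (fun y => ∑ i, u i y * fderiv ℝ f y (bas i)) = advR u f :=
    funext fun y => (advR_apply u f y).symm
  rw [e, ← toC_advR, ← p2]
  simp only [sub_mul]
  rw [integral_sub (by simpa only [mul_comm] using p1) k1, k2, sub_zero]
  simp only [mul_comm]

lemma sum_sqrt_le {s : ℝ} (hs : 0 ≤ s) (u : Fin d → 𝓢(Ed d, ℝ)) :
    ∑ i, √(∫ ξ, ‖ξ‖ ^ (2 * s) * ‖𝓕 (toC (u i)) ξ‖ ^ 2)
      ≤ d * √(∫ x, ∑ i, LamR d s (u i) x ^ 2) := by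
  have : ∀ i ∈ Finset.univ, √(∫ ξ, ‖ξ‖ ^ (2 * s) * ‖𝓕 (toC (u i)) ξ‖ ^ 2)
      ≤ √(∫ x, ∑ i, LamR d s (u i) x ^ 2) := by
    intro i _
    rw [← (LamR_sq hs (u i)).2]
    refine Real.sqrt_le_sqrt (integral_mono (LamR_sq hs (u i)).1
      (integrable_finsetSum _ fun j _ => (LamR_sq hs (u j)).1) fun x => ?_)
    exact Finset.single_le_sum (f := fun j => LamR d s (u j) x ^ 2) (fun j _ => sq_nonneg _)
      (Finset.mem_univ i)
  simpa using Finset.sum_le_card_nsmul _ _ _ this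

end KatoPonce

open scoped SchwartzMap LineDeriv

/-- Kato–Ponce commutator estimate: for `s > 1 + d/2` and divergence-free `u`,
`|(Λ^s(u·∇f) - u·∇Λ^s f, Λ^s f)_{L²}| ≤ C(‖∇u‖_∞ ‖Λ^s f‖ + ‖Λ^s u‖ ‖∇f‖_∞)‖Λ^s f‖`. -/
theorem stmt8 (d : ℕ) (s : ℝ) (hs : 1 + (d:ℝ) / 2 < s) :
    ∃ C > (0:ℝ), ∀ (u : Fin d → SchwartzMap (Ed d) ℝ) (f : SchwartzMap (Ed d) ℝ),
      (∀ x, ∑ i, fderiv ℝ (⇑(u i)) x (EuclideanSpace.single i 1) = 0) →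
      |∫ x : Ed d,
          (LamR d s (fun y => ∑ i, u i y * fderiv ℝ (⇑f) y (EuclideanSpace.single i 1)) x
            - ∑ i, u i x * fderiv ℝ (LamR d s (⇑f)) x (EuclideanSpace.single i 1))
          * LamR d s (⇑f) x|
      ≤ C * ((⨆ x : Ed d, Real.sqrt (∑ i, ∑ j,
              (fderiv ℝ (⇑(u j)) x (EuclideanSpace.single i 1))^2))
              * Real.sqrt (∫ x : Ed d, (LamR d s (⇑f) x)^2)
            + Real.sqrt (∫ x : Ed d, ∑ i, (LamR d s (⇑(u i)) x)^2)
              * (⨆ x : Ed d, Real.sqrt (∑ i,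
                  (fderiv ℝ (⇑f) x (EuclideanSpace.single i 1))^2)))
        * Real.sqrt (∫ x : Ed d, (LamR d s (⇑f) x)^2) := by
  have hs0 : 0 < s := by
    have : (0 : ℝ) ≤ d := Nat.cast_nonneg d
    linarith
  obtain ⟨C, hC, key⟩ := freq_estimate d hs0
  refine ⟨C * (d + 1) + 1, by positivity, fun u f hu => ?_⟩
  -- both suprema are over bounded families, so they dominate each pointwise value
  have bddU : BddAbove (Set.range fun x : Ed d => √(∑ i, ∑ j, (fderiv ℝ (u j) x (bas i)) ^ 2)) := by
    choose B hB0 hB using fun j => exists_fderiv_bound (u j)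
    refine ⟨√(∑ i : Fin d, ∑ j, B j), ?_⟩
    rintro _ ⟨x, rfl⟩
    exact Real.sqrt_le_sqrt (Finset.sum_le_sum fun i _ => Finset.sum_le_sum fun j _ => hB j x i)
  have bddF : BddAbove (Set.range fun x : Ed d => √(∑ i, (fderiv ℝ f x (bas i)) ^ 2)) := by
    obtain ⟨B, hB0, hB⟩ := exists_fderiv_bound f
    refine ⟨√(∑ i : Fin d, B), ?_⟩
    rintro _ ⟨x, rfl⟩
    exact Real.sqrt_le_sqrt (Finset.sum_le_sum fun i _ => hB x i)
  have hU : ∀ (i : Fin d) x v, |fderiv ℝ (u i) x v|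
      ≤ (⨆ x : Ed d, √(∑ i, ∑ j, (fderiv ℝ (u j) x (bas i)) ^ 2)) * ‖v‖ := by
    intro i x v
    refine (abs_apply_le _ v).trans ?_
    gcongr
    refine le_trans (Real.sqrt_le_sqrt (Finset.sum_le_sum fun k _ => ?_)) (le_ciSup bddU x)
    exact Finset.single_le_sum (f := fun j => (fderiv ℝ (u j) x (bas k)) ^ 2)
      (fun j _ => sq_nonneg _) (Finset.mem_univ i)
  have hF : ∀ (i : Fin d) x, ‖(∂_{bas i} (toC f) : 𝓢(Ed d, ℂ)) x‖
      ≤ ⨆ x : Ed d, √(∑ i, (fderiv ℝ f x (bas i)) ^ 2) := by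
    intro i x
    rw [lineDeriv_toC, Complex.norm_real, Real.norm_eq_abs]
    refine le_trans (Real.abs_le_sqrt ?_) (le_ciSup bddF x)
    exact Finset.single_le_sum (f := fun j => (fderiv ℝ f x (bas j)) ^ 2)
      (fun j _ => sq_nonneg _) (Finset.mem_univ i)
  have hU0 : 0 ≤ ⨆ x : Ed d, √(∑ i, ∑ j, (fderiv ℝ (u j) x (bas i)) ^ 2) :=
    Real.iSup_nonneg fun x => Real.sqrt_nonneg _
  have hF0 : 0 ≤ ⨆ x : Ed d, √(∑ i, (fderiv ℝ f x (bas i)) ^ 2) :=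
    Real.iSup_nonneg fun x => Real.sqrt_nonneg _
  have main := key u (toC f) _ _ hu hU hU0 hF hF0
  rw [← commutator_integral hs0.le u hu f, ← (LamR_sq hs0.le f).2] at main
  exact main.trans (final_arith hC (Nat.cast_nonneg d) (Real.sqrt_nonneg _) hU0 hF0
    (Real.sqrt_nonneg _) (sum_sqrt_le hs0.le u))
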